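/- arXiv:1812.10279 — 2 statements merged into one kernel-verified Lean document; each statement's English description precedes it below -/
import Mathlib

section
/- Let γ ≥ 1, s > 0, μ, k > 0, and let 0 < P⁺ < P⁻ be the two positive roots of f(P) = P^γ − C₁ + C₂/P, where C₁ = ((P⁺)^{γ+1} − (P⁻)^{γ+1})/(P⁺ − P⁻) and C₂ = P⁺P⁻·((P⁺)^γ − (P⁻)^γ)/(P⁺ − P⁻). Suppose F₁(P) ≤ 0 for all 0 < P < P⁺, where F₁(P) = F(P) − (sμP/k)² − F(P⁻) and F(P) = P^{γ+1}/(γ+1) − C₁P + C₂·ln P, and suppose in addition that sμ/k < √(−2f'(P⁺)). Then there exists a heteroclinic solution (P, Q̃) : ℝ → (0,∞) × ℝ of the system P' = (2/k²)Q̃, Q̃' = f(P) − (2μs/k²)Q̃ + (2/k²)Q̃²/P with (P, Q̃)(y) → (P⁻, 0) as y → −∞, (P, Q̃)(y) → (P⁺, 0) as y → +∞, and the profile P is non-monotone: P is neither monotone nondecreasing nor monotone nonincreasing on ℝ. -/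
open Filter Topology

/-!
In the variable `w = log (P⁻ / P)` the term quadratic in `Q` disappears and the system becomes the
damped equation `w'' = h(w) - c w'`, where `h(w) = -a f(P) / P`, `a = 2 / k²` and `c = 2 μ s / k²`.
The origin is a saddle. An orbit issuing from it inside a sector of the phase plane is a limit of
orbits that enter the sector earlier and earlier. Its energy `w'² / 2 - ∫₀ʷ h` decreases from `0`.
Since `h(w) → -∞` as `P → 0`, the potential `-∫₀ʷ h` is nonnegative at some large `W`, which traps
the orbit in `0 < w < W`; there `w₊ = log (P⁻ / P⁺)` is the only equilibrium of negative energy, and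
the orbit converges to it by LaSalle's principle.

`P` is not nondecreasing because it passes from `P⁻` to `P⁺ < P⁻`. If it were nonincreasing, then
`z = w₊ - w ≥ 0`, and by the spiral condition `z'' + c z' + b z ≤ 0` near `w₊` with `b > c² / 4`,
which forces `z` to reach `0` in finite time; but then the orbit stays at `w₊`, which contradicts
uniqueness for the differential equation.
-/

section LipschitzFields
open Set Metric
open scoped NNReal Manifold

variable {E : Type*} [NormedAddCommGroup E] [NormedSpace ℝ E] {X : E → E} {K : ℝ≥0}

theorem exists_hasDerivAt_Ioo_of_lipschitzWith [CompleteSpace E] (hX : LipschitzWith K X)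
    {ε : ℝ} (hε : 0 ≤ ε) (hKε : K * ε ≤ 1 / 2) (x₀ : E) :
    ∃ x : ℝ → E, x 0 = x₀ ∧ ∀ t ∈ Ioo (-ε) ε, HasDerivAt x (X (x t)) t := by
  lift ε to ℝ≥0 using hε
  have h0 : (0 : ℝ) ∈ Icc (-ε : ℝ) ε := by simp
  have hbound : ∀ x ∈ closedBall x₀ (2 * ε * ‖X x₀‖₊ : ℝ≥0), ‖X x‖ ≤ (2 * ‖X x₀‖₊ : ℝ≥0) := by
    intro x hx
    have hdist : ‖X x - X x₀‖ ≤ ‖X x₀‖ := calc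
      ‖X x - X x₀‖ ≤ K * ‖x - x₀‖ := hX.norm_sub_le x x₀
      _ ≤ K * (2 * ε * ‖X x₀‖) := by gcongr; simpa [dist_eq_norm] using hx
      _ = 2 * (K * ε) * ‖X x₀‖ := by ring
      _ ≤ 2 * (1 / 2) * ‖X x₀‖ := by gcongr
      _ = ‖X x₀‖ := by ring
    have := norm_le_norm_add_norm_sub' (X x) (X x₀)
    push_cast
    linarith
  have hPL : IsPicardLindelof (fun _ => X) (⟨0, h0⟩ : Icc (-ε : ℝ) ε) x₀ (2 * ε * ‖X x₀‖₊) 0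
      (2 * ‖X x₀‖₊) K :=
    ⟨fun _ _ => hX.lipschitzOnWith, fun _ _ => continuousOn_const, fun _ _ => hbound, by
      simp [mul_right_comm]⟩
  obtain ⟨x, hx₀, hx⟩ := hPL.exists_eq_forall_mem_Icc_hasDerivWithinAt₀
  exact ⟨x, hx₀, fun t ht => (hx t (Ioo_subset_Icc_self ht)).hasDerivAt (Icc_mem_nhds ht.1 ht.2)⟩

theorem exists_isIntegralCurve_of_lipschitzWith [CompleteSpace E] (hX₁ : ContDiff ℝ 1 X)
    (hX : LipschitzWith K X) (x₀ : E) :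
    ∃ x : ℝ → E, x 0 = x₀ ∧ IsIntegralCurve x fun _ => X := by
  have hKε : K * (1 / (2 * (K + 1)) : ℝ) ≤ 1 / 2 := by
    rw [mul_one_div, div_le_div_iff₀ (by positivity) (by positivity)]
    linarith
  obtain ⟨x, hx₀, hx⟩ := exists_isMIntegralCurve_of_isMIntegralCurveOn (I := 𝓘(ℝ, E)) (v := X)
    (contMDiff_vectorSpace_iff_contDiff.2 hX₁) (ε := 1 / (2 * (K + 1))) (by positivity)
    (fun y => by
      obtain ⟨z, hz₀, hz⟩ :=
        exists_hasDerivAt_Ioo_of_lipschitzWith hX (ε := 1 / (2 * (K + 1))) (by positivity) hKε y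
      exact ⟨z, hz₀, fun t ht => (hz t ht).hasFDerivAt.hasMFDerivAt.hasMFDerivWithinAt⟩) x₀
  exact ⟨x, hx₀, fun t => hasDerivAt_iff_hasFDerivAt.2 (hasMFDerivAt_iff_hasFDerivAt.1 (hx t))⟩

theorem isIntegralCurve_eq_of_contDiff [CompleteSpace E] (hX₁ : ContDiff ℝ 1 X) {x y : ℝ → E}
    (hx : IsIntegralCurve x fun _ => X) (hy : IsIntegralCurve y fun _ => X) {t₀ : ℝ}
    (h : x t₀ = y t₀) : x = y :=
  isMIntegralCurve_eq_of_contMDiff (I := 𝓘(ℝ, E)) (v := X)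
    (fun _ => BoundarylessManifold.isInteriorPoint)
    (contMDiff_vectorSpace_iff_contDiff.2 hX₁) (fun t => (hx t).hasFDerivAt.hasMFDerivAt)
    (fun t => (hy t).hasFDerivAt.hasMFDerivAt) h

theorem dist_le_mul_exp_of_isIntegralCurve (hX : LipschitzWith K X) {x y : ℝ → E}
    (hx : IsIntegralCurve x fun _ => X) (hy : IsIntegralCurve y fun _ => X) {t : ℝ} (ht : t ≤ 0) :
    dist (x t) (y t) ≤ dist (x 0) (y 0) * Real.exp (K * -t) := by
  have hrev : ∀ {z : ℝ → E}, (IsIntegralCurve z fun _ => X) →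
      IsIntegralCurve (fun s => z (-s)) fun _ p => -X p := fun hz s => by
    simpa [Function.comp_def] using (hz (-s)).scomp s (hasDerivAt_neg s)
  have hneg : LipschitzWith K fun p => -X p := hX.neg
  simpa using dist_le_of_trajectories_ODE (v := fun _ p => -X p) (K := K) (a := 0) (b := -t)
    (fun _ => hneg) (hrev hx).continuous.continuousOn
    (fun s _ => (hrev hx s).hasDerivWithinAt) (hrev hy).continuous.continuousOn
    (fun s _ => (hrev hy s).hasDerivWithinAt) (by simp) (-t) ⟨by linarith, le_rfl⟩

theorem exists_isIntegralCurve_forall_nonpos_mem [CompleteSpace E] (hX₁ : ContDiff ℝ 1 X)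
    (hX : LipschitzWith K X) {A S : Set E} (hA : IsCompact A) (hS : IsClosed S)
    (h : ∀ n : ℕ, ∃ x : ℝ → E, (IsIntegralCurve x fun _ => X) ∧ x 0 ∈ A ∧
      ∀ t ∈ Icc (-n : ℝ) 0, x t ∈ S) :
    ∃ x : ℝ → E, (IsIntegralCurve x fun _ => X) ∧ x 0 ∈ A ∧ ∀ t ≤ 0, x t ∈ S := by
  choose x hx hxA hxS using h
  obtain ⟨a, haA, φ, hφ, hlim⟩ := hA.tendsto_subseq hxA
  obtain ⟨y, hy₀, hy⟩ := exists_isIntegralCurve_of_lipschitzWith hX₁ hX a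
  refine ⟨y, hy, hy₀ ▸ haA, fun t ht => ?_⟩
  have hlim_t : Tendsto (fun n => x (φ n) t) atTop (𝓝 (y t)) := by
    refine tendsto_iff_dist_tendsto_zero.2 (squeeze_zero (fun _ => dist_nonneg)
      (fun n => dist_le_mul_exp_of_isIntegralCurve hX (hx (φ n)) hy ht) ?_)
    simpa [hy₀] using (tendsto_iff_dist_tendsto_zero.1 hlim).mul_const (Real.exp (K * -t))
  refine hS.mem_of_tendsto hlim_t ?_
  filter_upwards [(tendsto_natCast_atTop_atTop.comp hφ.tendsto_atTop).eventually_ge_atTop (-t)]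
    with n hn
  exact hxS (φ n) t ⟨by simp only [Function.comp_apply] at hn; linarith, ht⟩

end LipschitzFields

section Calculus
open Set Metric
open scoped NNReal

variable {E F : Type*} [NormedAddCommGroup E] [NormedSpace ℝ E] [NormedAddCommGroup F]
  [NormedSpace ℝ F]

theorem exists_lipschitzWith_eqOn_closedBall [FiniteDimensional ℝ E] {h : E → F}
    (hh : ContDiff ℝ 1 h) (x₀ : E) {R : ℝ} (hR : 0 < R) :
    ∃ g : E → F, ContDiff ℝ 1 g ∧ (∃ K : ℝ≥0, LipschitzWith K g) ∧ EqOn g h (closedBall x₀ R) := by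
  let φ : ContDiffBump x₀ := ⟨R, R + 1, hR, lt_add_one R⟩
  have hφh : ContDiff ℝ 1 fun x => φ x • h x := φ.contDiff.smul hh
  exact ⟨_, hφh, hφh.lipschitzWith_of_hasCompactSupport φ.hasCompactSupport.smul_right one_ne_zero,
    fun x hx => by simp [φ.one_of_mem_closedBall hx]⟩

/-- Barbalat's lemma. -/
theorem tendsto_deriv_zero_of_uniformContinuous {f f' : ℝ → E} {L : E}
    (hf : ∀ t, HasDerivAt f (f' t) t) (hf' : UniformContinuous f') (hL : Tendsto f atTop (𝓝 L)) :
    Tendsto f' atTop (𝓝 0) := by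
  refine Metric.tendsto_atTop'.2 fun ε hε => ?_
  obtain ⟨δ, hδ, hclose⟩ := uniformContinuous_iff_le.1 hf' (ε / 2) (half_pos hε)
  have hmean : ∀ t, δ * ‖f' t‖ ≤ ‖f (t + δ) - f t‖ + δ * (ε / 2) := by
    intro t
    have hderiv : ∀ s ∈ Icc t (t + δ),
        HasDerivWithinAt (fun s => f s - s • f' t) (f' s - f' t) (Icc t (t + δ)) s := fun s _ => by
      simpa using ((hf s).fun_sub ((hasDerivAt_id' s).smul_const (f' t))).hasDerivWithinAt
    have hbound : ∀ s ∈ Ico t (t + δ), ‖f' s - f' t‖ ≤ ε / 2 := fun s hs => by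
      rw [← dist_eq_norm]
      exact hclose (by rw [Real.dist_eq, abs_of_nonneg] <;> linarith [hs.1, hs.2])
    have hmv := norm_image_sub_le_of_norm_deriv_le_segment' hderiv hbound (t + δ)
      (right_mem_Icc.2 (by linarith))
    have hsplit : δ • f' t = (f (t + δ) - f t) -
        (f (t + δ) - (t + δ) • f' t - (f t - t • f' t)) := by module
    calc δ * ‖f' t‖ = ‖δ • f' t‖ := by rw [norm_smul, Real.norm_of_nonneg hδ.le]
      _ ≤ ‖f (t + δ) - f t‖ + ‖f (t + δ) - (t + δ) • f' t - (f t - t • f' t)‖ :=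
        hsplit ▸ norm_sub_le _ _
      _ ≤ ‖f (t + δ) - f t‖ + δ * (ε / 2) := by gcongr; linarith
  have hdiff : Tendsto (fun t => ‖f (t + δ) - f t‖) atTop (𝓝 0) := by
    simpa using ((hL.comp (tendsto_atTop_add_const_right _ δ tendsto_id)).sub hL).norm
  obtain ⟨N, hN⟩ := eventually_atTop.1 (hdiff.eventually_lt_const (by positivity : 0 < δ * (ε / 2)))
  refine ⟨N, fun t ht => ?_⟩
  have := hmean t
  have := hN t ht.le
  rw [dist_zero_right]
  exact lt_of_mul_lt_mul_left (by linarith) hδ.le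

theorem uniformContinuous_comp_of_isIntegralCurve_mem {Y : Type*} [UniformSpace Y] {X : E → E}
    {x : ℝ → E} {K : Set E} {G : E → Y} (hX : Continuous X) (hx : IsIntegralCurve x fun _ => X)
    (hK : IsCompact K) (hxK : ∀ t, x t ∈ K) (hG : Continuous G) :
    UniformContinuous fun t => G (x t) := by
  obtain ⟨C, hC⟩ := hK.exists_bound_of_continuousOn hX.continuousOn
  have hx_lip : LipschitzWith C.toNNReal x :=
    lipschitzWith_of_nnnorm_deriv_le (fun t => (hx t).differentiableAt) fun t => by
      rw [(hx t).deriv, ← NNReal.coe_le_coe, coe_nnnorm]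
      exact (hC _ (hxK t)).trans (Real.le_coe_toNNReal C)
  have hG_uc := hK.uniformContinuousOn_of_continuous hG.continuousOn
  exact Tendsto.comp hG_uc (tendsto_inf.2 ⟨hx_lip.uniformContinuous,
    tendsto_principal.2 (Eventually.of_forall fun p => ⟨hxK p.1, hxK p.2⟩)⟩)

theorem tendsto_zero_of_isIntegralCurve_mem_of_hasDerivAt {X : E → E} {x : ℝ → E} {K : Set E}
    {G : E → F} {f : ℝ → F} {L : F} (hX : Continuous X) (hx : IsIntegralCurve x fun _ => X)
    (hK : IsCompact K) (hxK : ∀ t, x t ∈ K) (hG : Continuous G)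
    (hf : ∀ t, HasDerivAt f (G (x t)) t) (hL : Tendsto f atTop (𝓝 L)) :
    Tendsto (fun t => G (x t)) atTop (𝓝 0) :=
  tendsto_deriv_zero_of_uniformContinuous hf
    (uniformContinuous_comp_of_isIntegralCurve_mem hX hx hK hxK hG) hL

theorem mul_exp_le_of_mul_le_deriv {f f' : ℝ → ℝ} {l a b : ℝ} (hab : a ≤ b)
    (hf : ∀ t ∈ Icc a b, HasDerivAt f (f' t) t) (hf' : ∀ t ∈ Icc a b, l * f t ≤ f' t) :
    f a * Real.exp (l * (b - a)) ≤ f b := by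
  have hderiv : ∀ t ∈ Icc a b, HasDerivAt (fun t => f t * Real.exp (l * (b - t)))
      ((f' t - l * f t) * Real.exp (l * (b - t))) t := fun t ht => by
    exact ((hf t ht).fun_mul (((hasDerivAt_id' t).const_sub b).const_mul l).exp).congr_deriv
      (by ring)
  have hmono : MonotoneOn (fun t => f t * Real.exp (l * (b - t))) (Icc a b) := by
    refine monotoneOn_of_hasDerivWithinAt_nonneg (convex_Icc a b)
      (fun t ht => (hderiv t ht).continuousAt.continuousWithinAt)
      (fun t ht => (hderiv t (interior_subset ht)).hasDerivWithinAt) fun t ht => ?_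
    exact mul_nonneg (sub_nonneg.2 (hf' t (interior_subset ht))) (Real.exp_pos _).le
  simpa using hmono (left_mem_Icc.2 hab) (right_mem_Icc.2 hab) hab

theorem le_mul_exp_of_deriv_le_mul {f f' : ℝ → ℝ} {l a b : ℝ} (hab : a ≤ b)
    (hf : ∀ t ∈ Icc a b, HasDerivAt f (f' t) t) (hf' : ∀ t ∈ Icc a b, f' t ≤ l * f t) :
    f b ≤ f a * Real.exp (l * (b - a)) := by
  have := mul_exp_le_of_mul_le_deriv (l := l) hab (fun t ht => (hf t ht).neg)
    (fun t ht => by simpa using hf' t ht)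
  simpa using this

theorem exists_firstExit {Y : Type*} [TopologicalSpace Y] {x : ℝ → Y} {U : Set Y}
    (hx : Continuous x) (hU : IsOpen U) {a : ℝ} (ha : x a ∈ U) (hexit : ∃ t ≥ a, x t ∉ U) :
    ∃ T > a, (∀ t ∈ Ico a T, x t ∈ U) ∧ x T ∈ frontier U := by
  let S : Set ℝ := Ici a ∩ x ⁻¹' Uᶜ
  have hS : IsClosed S := isClosed_Ici.inter (hU.isClosed_compl.preimage hx)
  have hbdd : BddBelow S := bddBelow_Ici.mono inter_subset_left
  obtain ⟨haT, hT⟩ : sInf S ∈ S := hS.csInf_mem hexit hbdd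
  have hinside : ∀ t ∈ Ico a (sInf S), x t ∈ U := fun t ht => by
    by_contra htU
    exact notMem_of_lt_csInf ht.2 hbdd ⟨ht.1, htU⟩
  have hlt : a < sInf S := lt_of_le_of_ne haT fun h => hT (h ▸ ha)
  refine ⟨sInf S, hlt, hinside, hU.frontier_eq ▸ ⟨?_, hT⟩⟩
  refine map_mem_closure hx ?_ hinside
  exact closure_Ico hlt.ne ▸ right_mem_Icc.2 haT

theorem eventually_add_mul_sub_le_of_lt_deriv {f : ℝ → ℝ} {f' m a : ℝ} (hf : HasDerivAt f f' a)
    (hm : m < f') : ∀ᶠ x in 𝓝[≥] a, f a + m * (x - a) ≤ f x := by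
  have hslope := eventually_nhdsWithin_iff.1 (hf.tendsto_slope.eventually_const_lt hm)
  filter_upwards [eventually_nhdsWithin_of_eventually_nhds hslope, self_mem_nhdsWithin]
    with x hx hax
  rcases (mem_Ici.1 hax).eq_or_lt with rfl | hlt
  · simp
  · have := hx hlt.ne'
    rw [slope_def_field, lt_div_iff₀ (sub_pos.2 hlt)] at this
    linarith

theorem eq_of_mapClusterPt_of_tendsto {ι Y : Type*} [TopologicalSpace Y] [T2Space Y]
    {l : Filter ι} {u : ι → Y} {a b : Y} (ha : MapClusterPt a l u) (hb : Tendsto u l (𝓝 b)) :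
    a = b :=
  eq_of_nhds_neBot (ha.neBot.mono (inf_le_inf_left _ hb))

theorem exists_gt_integral_nonpos {h : ℝ → ℝ} (hh : Continuous h) (hlim : Tendsto h atTop atBot)
    (A : ℝ) : ∃ W > A, ∫ z in (0)..W, h z ≤ 0 := by
  obtain ⟨B, hB⟩ := eventually_atTop.1 (hlim.eventually_le_atBot (-1))
  set M := ∫ z in (0)..B, h z
  obtain ⟨W, hAW, hBW, hMW⟩ := ((eventually_gt_atTop A).and
    ((eventually_ge_atTop B).and (eventually_ge_atTop (B + M)))).exists
  have htail : ∫ z in B..W, h z ≤ ∫ _ in B..W, (-1 : ℝ) :=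
    intervalIntegral.integral_mono_on hBW (hh.intervalIntegrable _ _) (by simp)
      fun z hz => hB z hz.1
  refine ⟨W, hAW, ?_⟩
  rw [← intervalIntegral.integral_add_adjacent_intervals (hh.intervalIntegrable 0 B)
    (hh.intervalIntegrable B W)]
  rw [intervalIntegral.integral_const, smul_eq_mul] at htail
  linarith

theorem pos_of_strictConvexOn_of_lt {s : Set ℝ} {q : ℝ → ℝ} (hq : StrictConvexOn ℝ s q)
    {x a b : ℝ} (hx : x ∈ s) (hb : b ∈ s) (hxa : x < a) (hab : a < b) (hqa : q a = 0)
    (hqb : q b = 0) : 0 < q x := by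
  have := hq.slope_strict_mono_adjacent hx hb hxa hab
  rwa [hqa, hqb, sub_self, zero_div, zero_sub, neg_div, neg_lt_zero,
    div_pos_iff_of_pos_right (sub_pos.2 hxa)] at this

theorem neg_of_strictConvexOn_of_mem_Ioo {s : Set ℝ} {q : ℝ → ℝ} (hq : StrictConvexOn ℝ s q)
    {x a b : ℝ} (ha : a ∈ s) (hb : b ∈ s) (hx : x ∈ Ioo a b) (hqa : q a = 0)
    (hqb : q b = 0) : q x < 0 := by
  have hab := hx.1.trans hx.2
  have := hq.lt_on_openSegment ha hb hab.ne (openSegment_eq_Ioo hab ▸ hx)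
  simpa [hqa, hqb] using this

end Calculus

section DampedEquation
open Set
open scoped NNReal

/-- The phase-plane vector field of the damped equation `w'' = g(w) - c w'`, in the coordinates
`(w, w')`. -/
def dampedField (g : ℝ → ℝ) (c : ℝ) (p : ℝ × ℝ) : ℝ × ℝ := (p.2, g p.1 - c * p.2)

variable {g : ℝ → ℝ} {c : ℝ} {x : ℝ → ℝ × ℝ}

theorem contDiff_dampedField (hg : ContDiff ℝ 1 g) (c : ℝ) : ContDiff ℝ 1 (dampedField g c) :=
  contDiff_snd.prodMk ((hg.comp contDiff_fst).sub (contDiff_const.mul contDiff_snd))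

theorem exists_lipschitzWith_dampedField {K : ℝ≥0} (hg : LipschitzWith K g) (c : ℝ) :
    ∃ L : ℝ≥0, LipschitzWith L (dampedField g c) :=
  ⟨_, LipschitzWith.prod_snd.prodMk
    ((hg.comp LipschitzWith.prod_fst).sub ((lipschitzWith_smul c).comp LipschitzWith.prod_snd))⟩

theorem hasDerivAt_fst_of_dampedField (hx : IsIntegralCurve x fun _ => dampedField g c) (t : ℝ) :
    HasDerivAt (fun t => (x t).1) (x t).2 t :=
  (hx t).fst

theorem hasDerivAt_snd_of_dampedField (hx : IsIntegralCurve x fun _ => dampedField g c) (t : ℝ) :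
    HasDerivAt (fun t => (x t).2) (g (x t).1 - c * (x t).2) t :=
  (hx t).snd

theorem mul_fst_le_snd_of_dampedField (hx : IsIntegralCurve x fun _ => dampedField g c)
    {m a b : ℝ} (hab : a ≤ b) (hg : ∀ t ∈ Icc a b, m * (m + c) * (x t).1 ≤ g (x t).1)
    (ha : m * (x a).1 ≤ (x a).2) : m * (x b).1 ≤ (x b).2 := by
  have hexp := mul_exp_le_of_mul_le_deriv (l := -(m + c)) hab
    (fun t _ => (hasDerivAt_snd_of_dampedField hx t).sub
      ((hasDerivAt_fst_of_dampedField hx t).const_mul m))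
    (fun t ht => by simp only [Pi.sub_apply]; linarith [hg t ht])
  have := (mul_nonneg (sub_nonneg.2 ha) (Real.exp_pos _).le).trans hexp
  exact sub_nonneg.1 this

theorem snd_le_mul_fst_of_dampedField (hx : IsIntegralCurve x fun _ => dampedField g c)
    {m a b : ℝ} (hab : a ≤ b) (hg : ∀ t ∈ Icc a b, g (x t).1 ≤ m * (m + c) * (x t).1)
    (ha : (x a).2 ≤ m * (x a).1) : (x b).2 ≤ m * (x b).1 := by
  have hexp := mul_exp_le_of_mul_le_deriv (l := -(m + c)) hab
    (fun t _ => ((hasDerivAt_fst_of_dampedField hx t).const_mul m).sub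
      (hasDerivAt_snd_of_dampedField hx t))
    (fun t ht => by simp only [Pi.sub_apply]; linarith [hg t ht])
  have := (mul_nonneg (sub_nonneg.2 ha) (Real.exp_pos _).le).trans hexp
  exact sub_nonneg.1 this

/-- The part `0 ≤ w ≤ δ` of the sector of the `(w, v)`-plane between the lines `v = αw` and
`v = βw`. -/
def planeSector (α β δ : ℝ) : Set (ℝ × ℝ) :=
  {p | p.1 ∈ Icc 0 δ ∧ p.2 ∈ Icc (α * p.1) (β * p.1)}

theorem isClosed_planeSector (α β δ : ℝ) : IsClosed (planeSector α β δ) :=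
  (isClosed_Icc.preimage continuous_fst).inter <|
    (isClosed_le (continuous_fst.const_mul α) continuous_snd).inter
      (isClosed_le continuous_snd (continuous_fst.const_mul β))

variable {α β δ : ℝ}

theorem mem_planeSector_of_fst_mem_Icc (hx : IsIntegralCurve x fun _ => dampedField g c)
    (hg : ∀ w ∈ Icc 0 δ, g w ∈ Icc (α * (α + c) * w) (β * (β + c) * w)) {a b : ℝ} (hab : a ≤ b)
    (ha : x a ∈ planeSector α β δ) (hδ : ∀ t ∈ Icc a b, (x t).1 ∈ Icc 0 δ) :
    x b ∈ planeSector α β δ :=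
  ⟨hδ b (right_mem_Icc.2 hab),
    mul_fst_le_snd_of_dampedField hx hab (fun t ht => (hg _ (hδ t ht)).1) ha.2.1,
    snd_le_mul_fst_of_dampedField hx hab (fun t ht => (hg _ (hδ t ht)).2) ha.2.2⟩

theorem fst_mul_exp_le_of_mem_planeSector (hx : IsIntegralCurve x fun _ => dampedField g c)
    {a b : ℝ} (hab : a ≤ b) (h : ∀ t ∈ Icc a b, x t ∈ planeSector α β δ) :
    (x a).1 * Real.exp (α * (b - a)) ≤ (x b).1 :=
  mul_exp_le_of_mul_le_deriv hab (fun t _ => hasDerivAt_fst_of_dampedField hx t)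
    fun t ht => (h t ht).2.1

theorem fst_le_mul_exp_of_mem_planeSector (hx : IsIntegralCurve x fun _ => dampedField g c)
    {a b : ℝ} (hab : a ≤ b) (h : ∀ t ∈ Icc a b, x t ∈ planeSector α β δ) :
    (x b).1 ≤ (x a).1 * Real.exp (β * (b - a)) :=
  le_mul_exp_of_deriv_le_mul hab (fun t _ => hasDerivAt_fst_of_dampedField hx t)
    fun t ht => (h t ht).2.2

theorem exists_fst_eq_of_mem_planeSector (hx : IsIntegralCurve x fun _ => dampedField g c)
    (hα : 0 < α) (hg : ∀ w ∈ Icc 0 δ, g w ∈ Icc (α * (α + c) * w) (β * (β + c) * w))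
    (h₀ : x 0 ∈ planeSector α β δ) (hpos : 0 < (x 0).1) :
    ∃ T ≥ 0, (x T).1 = δ ∧ ∀ t ∈ Icc 0 T, x t ∈ planeSector α β δ := by
  rcases h₀.1.2.eq_or_lt with hδ | hδ
  · exact ⟨0, le_rfl, hδ, fun t ht => by rwa [Icc_self, mem_singleton_iff.1 ht] at *⟩
  have hcont : Continuous fun t => (x t).1 := continuous_fst.comp hx.continuous
  have hsector : ∀ T, (∀ t ∈ Icc 0 T, (x t).1 ∈ Icc 0 δ) → ∀ t ∈ Icc 0 T, x t ∈ planeSector α β δ :=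
    fun T hT t ht => mem_planeSector_of_fst_mem_Icc hx hg ht.1 h₀
      fun s hs => hT s ⟨hs.1, hs.2.trans ht.2⟩
  have hexit : ∃ t ≥ 0, (x t).1 ∉ Ioo 0 δ := by
    by_contra! hstay
    have hT : 0 ≤ Real.log (δ / (x 0).1) / α :=
      div_nonneg (Real.log_nonneg ((one_le_div hpos).2 hδ.le)) hα.le
    have := fst_mul_exp_le_of_mem_planeSector hx hT
      (hsector _ fun t ht => Ioo_subset_Icc_self (hstay t ht.1))
    rw [sub_zero, mul_div_cancel₀ _ hα.ne', Real.exp_log (div_pos (hpos.trans hδ) hpos),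
      mul_div_cancel₀ _ hpos.ne'] at this
    exact (hstay _ hT).2.not_ge this
  obtain ⟨T, hT, hstay, hTδ⟩ := exists_firstExit hcont isOpen_Ioo ⟨hpos, hδ⟩ hexit
  rw [frontier_Ioo (hpos.trans hδ)] at hTδ
  have hIcc : ∀ t ∈ Icc 0 T, (x t).1 ∈ Icc 0 δ := fun t ht => by
    rcases ht.2.eq_or_lt with rfl | htT
    · rcases hTδ with h | h <;> rw [h] <;> simp [(hpos.trans hδ).le]
    · exact Ioo_subset_Icc_self (hstay t ⟨ht.1, htT⟩)
  have hgrow := fst_mul_exp_le_of_mem_planeSector hx hT.le (hsector T hIcc)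
  have hTpos : 0 < (x T).1 := lt_of_lt_of_le (by positivity) hgrow
  exact ⟨T, hT.le, hTδ.resolve_left hTpos.ne', hsector T hIcc⟩

/-- The orbit is issued from `(ε, αε)` with `ε = δ e^{-βτ}`, so that it takes at least the time `τ`
to reach `w = δ`, and then shifted in time. -/
theorem exists_dampedField_forall_Icc_mem_planeSector {K : ℝ≥0} (hg₁ : ContDiff ℝ 1 g)
    (hgK : LipschitzWith K g) (hα : 0 < α) (hαβ : α ≤ β) (hδ : 0 < δ)
    (hg : ∀ w ∈ Icc 0 δ, g w ∈ Icc (α * (α + c) * w) (β * (β + c) * w)) {τ : ℝ} (hτ : 0 ≤ τ) :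
    ∃ x : ℝ → ℝ × ℝ, (IsIntegralCurve x fun _ => dampedField g c) ∧ (x 0).1 = δ ∧
      ∀ t ∈ Icc (-τ) 0, x t ∈ planeSector α β δ := by
  obtain ⟨L, hX⟩ := exists_lipschitzWith_dampedField hgK c
  set ε := δ * Real.exp (-(β * τ)) with hε
  have hβ : 0 < β := hα.trans_le hαβ
  have hε₀ : 0 < ε := by positivity
  have hεδ : ε ≤ δ := mul_le_of_le_one_right hδ.le
    (Real.exp_le_one_iff.2 (neg_nonpos.2 (by positivity)))
  obtain ⟨y, hy₀, hy⟩ :=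
    exists_isIntegralCurve_of_lipschitzWith (contDiff_dampedField hg₁ c) hX (ε, α * ε)
  have hyS : y 0 ∈ planeSector α β δ := by
    rw [hy₀]
    exact ⟨⟨hε₀.le, hεδ⟩, le_rfl, by dsimp only; gcongr⟩
  obtain ⟨T, hT, hyT, hsector⟩ := exists_fst_eq_of_mem_planeSector hy hα hg hyS (by simp [hy₀, hε₀])
  have hτT : τ ≤ T := by
    have hgrow := fst_le_mul_exp_of_mem_planeSector hy hT hsector
    rw [hyT, hy₀, hε, mul_assoc, ← Real.exp_add, le_mul_iff_one_le_right hδ, Real.one_le_exp_iff]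
      at hgrow
    exact le_of_mul_le_mul_left (by linarith) hβ
  refine ⟨y ∘ (· + T), hy.comp_add T, by simpa using hyT, fun t ht => hsector _ ⟨?_, ?_⟩⟩
  · linarith [ht.1]
  · linarith [ht.2]

theorem exists_dampedField_forall_nonpos_mem_planeSector {K : ℝ≥0} (hg₁ : ContDiff ℝ 1 g)
    (hgK : LipschitzWith K g) (hα : 0 < α) (hαβ : α ≤ β) (hδ : 0 < δ)
    (hg : ∀ w ∈ Icc 0 δ, g w ∈ Icc (α * (α + c) * w) (β * (β + c) * w)) :
    ∃ x : ℝ → ℝ × ℝ, (IsIntegralCurve x fun _ => dampedField g c) ∧ (x 0).1 = δ ∧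
      ∀ t ≤ 0, x t ∈ planeSector α β δ := by
  obtain ⟨L, hX⟩ := exists_lipschitzWith_dampedField hgK c
  have hcompact : IsCompact ({δ} ×ˢ Icc (α * δ) (β * δ)) := isCompact_singleton.prod isCompact_Icc
  have hsegments (n : ℕ) : ∃ x : ℝ → ℝ × ℝ, (IsIntegralCurve x fun _ => dampedField g c) ∧
      x 0 ∈ {δ} ×ˢ Icc (α * δ) (β * δ) ∧ ∀ t ∈ Icc (-n : ℝ) 0, x t ∈ planeSector α β δ := by
    obtain ⟨x, hx, hx₀, hxS⟩ :=
      exists_dampedField_forall_Icc_mem_planeSector hg₁ hgK hα hαβ hδ hg n.cast_nonneg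
    exact ⟨x, hx, ⟨hx₀, hx₀ ▸ (hxS 0 (by simp)).2⟩, hxS⟩
  obtain ⟨x, hx, hx₀, hxS⟩ := exists_isIntegralCurve_forall_nonpos_mem (contDiff_dampedField hg₁ c)
    hX hcompact (isClosed_planeSector α β δ) hsegments
  exact ⟨x, hx, hx₀.1, hxS⟩

theorem tendsto_zero_atBot_of_mem_planeSector (hx : IsIntegralCurve x fun _ => dampedField g c)
    (hα : 0 < α) (h : ∀ t ≤ 0, x t ∈ planeSector α β δ) : Tendsto x atBot (𝓝 0) := by
  have hexp : Tendsto (fun t => (x 0).1 * Real.exp (α * t)) atBot (𝓝 0) := by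
    simpa using (Real.tendsto_exp_atBot.comp (tendsto_id.const_mul_atBot hα)).const_mul (x 0).1
  have hfst : Tendsto (fun t => (x t).1) atBot (𝓝 0) := by
    refine tendsto_of_tendsto_of_tendsto_of_le_of_le' tendsto_const_nhds hexp ?_ ?_
    · filter_upwards [eventually_le_atBot 0] with t ht using (h t ht).1.1
    · filter_upwards [eventually_le_atBot 0] with t ht
      have := fst_mul_exp_le_of_mem_planeSector hx ht fun s hs => h s hs.2
      rwa [← le_div_iff₀ (Real.exp_pos _), div_eq_mul_inv, ← Real.exp_neg,
        show -(α * (0 - t)) = α * t by ring] at this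
  have hsnd : Tendsto (fun t => (x t).2) atBot (𝓝 0) := by
    refine tendsto_of_tendsto_of_tendsto_of_le_of_le'
      (by simpa using hfst.const_mul α) (by simpa using hfst.const_mul β) ?_ ?_
    · filter_upwards [eventually_le_atBot 0] with t ht using (h t ht).2.1
    · filter_upwards [eventually_le_atBot 0] with t ht using (h t ht).2.2
  exact hfst.prodMk_nhds hsnd

theorem exists_linear_bounds_of_deriv_pos (hg0 : g 0 = 0) (hg'0 : 0 < deriv g 0) (c : ℝ) :
    ∃ α β δ : ℝ, 0 < α ∧ α ≤ β ∧ 0 < δ ∧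
      ∀ w ∈ Icc 0 δ, g w ∈ Icc (α * (α + c) * w) (β * (β + c) * w) := by
  have hderiv : HasDerivAt g (deriv g 0) 0 :=
    (differentiableAt_of_deriv_ne_zero hg'0.ne').hasDerivAt
  have hsmall : ∀ᶠ α : ℝ in 𝓝[>] 0, α * (α + c) < deriv g 0 := by
    have : ContinuousAt (fun α : ℝ => α * (α + c)) 0 := by fun_prop
    exact nhdsWithin_le_nhds (this.eventually_lt_const (by simpa using hg'0))
  obtain ⟨α, hα, hα₀⟩ := (hsmall.and self_mem_nhdsWithin).exists
  have hlarge : Tendsto (fun β : ℝ => β * (β + c)) atTop atTop :=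
    tendsto_id.atTop_mul_atTop₀ (tendsto_atTop_add_const_right _ c tendsto_id)
  obtain ⟨β, hβ, hαβ⟩ :=
    ((hlarge.eventually_gt_atTop (deriv g 0)).and (eventually_ge_atTop α)).exists
  obtain ⟨δ, hδ, hbounds⟩ := mem_nhdsGE_iff_exists_Icc_subset.1
    ((eventually_add_mul_sub_le_of_lt_deriv hderiv hα).and
      (eventually_add_mul_sub_le_of_lt_deriv hderiv.neg (neg_lt_neg hβ)))
  refine ⟨α, β, δ, hα₀, hαβ, hδ, fun w hw => ?_⟩
  obtain ⟨hlower, hupper⟩ := hbounds hw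
  simp only [hg0, Pi.neg_apply, neg_zero, zero_add, sub_zero] at hlower hupper
  exact ⟨hlower, by linarith⟩

theorem exists_dampedField_tendsto_zero_atBot {K : ℝ≥0} (hg₁ : ContDiff ℝ 1 g)
    (hgK : LipschitzWith K g) (hg0 : g 0 = 0) (hg'0 : 0 < deriv g 0) (c : ℝ) :
    ∃ x : ℝ → ℝ × ℝ, (IsIntegralCurve x fun _ => dampedField g c) ∧
      (∀ t ≤ 0, 0 < (x t).1 ∧ 0 < (x t).2) ∧ Tendsto x atBot (𝓝 0) := by
  obtain ⟨α, β, δ, hα, hαβ, hδ, hbounds⟩ := exists_linear_bounds_of_deriv_pos hg0 hg'0 c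
  obtain ⟨x, hx, hx₀, hxS⟩ :=
    exists_dampedField_forall_nonpos_mem_planeSector hg₁ hgK hα hαβ hδ hbounds
  have hfst : ∀ t ≤ 0, 0 < (x t).1 := fun t ht => by
    have := fst_le_mul_exp_of_mem_planeSector hx ht fun s hs => hxS s hs.2
    exact pos_of_mul_pos_left (hδ.trans_le (hx₀ ▸ this)) (Real.exp_pos _).le
  exact ⟨x, hx, fun t ht => ⟨hfst t ht, (mul_pos hα (hfst t ht)).trans_le (hxS t ht).2.1⟩,
    tendsto_zero_atBot_of_mem_planeSector hx hα hxS⟩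

/-- The mechanical energy `v² / 2 - ∫₀ʷ g` of the undamped equation `w'' = g(w)`; it is a Lyapunov
function of the damped one. -/
noncomputable def dampedEnergy (g : ℝ → ℝ) (p : ℝ × ℝ) : ℝ := p.2 ^ 2 / 2 - ∫ z in (0)..p.1, g z

theorem continuous_dampedEnergy (hg : Continuous g) : Continuous (dampedEnergy g) := by
  have : Continuous fun w => ∫ z in (0)..w, g z :=
    intervalIntegral.continuous_primitive (fun _ _ => hg.intervalIntegrable _ _) 0
  unfold dampedEnergy
  fun_prop

theorem hasDerivAt_dampedEnergy (hg : Continuous g)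
    (hx : IsIntegralCurve x fun _ => dampedField g c) (t : ℝ) :
    HasDerivAt (fun t => dampedEnergy g (x t)) (-c * (x t).2 ^ 2) t := by
  have hpotential := (hg.integral_hasStrictDerivAt 0 (x t).1).hasDerivAt.comp t
    (hasDerivAt_fst_of_dampedField hx t)
  refine ((((hasDerivAt_snd_of_dampedField hx t).pow 2).div_const 2).sub hpotential).congr_deriv ?_
  push_cast
  ring

theorem antitone_dampedEnergy (hg : Continuous g) (hc : 0 ≤ c)
    (hx : IsIntegralCurve x fun _ => dampedField g c) : Antitone fun t => dampedEnergy g (x t) :=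
  antitone_of_hasDerivAt_nonpos (hasDerivAt_dampedEnergy hg hx) fun t =>
    mul_nonpos_of_nonpos_of_nonneg (neg_nonpos.2 hc) (sq_nonneg (x t).2)

theorem dampedEnergy_neg_of_tendsto_zero_atBot (hg : Continuous g) (hc : 0 < c)
    (hx : IsIntegralCurve x fun _ => dampedField g c) (hlim : Tendsto x atBot (𝓝 0))
    (hsnd : ∀ t ≤ 0, (x t).2 ≠ 0) (t : ℝ) : dampedEnergy g (x t) < 0 := by
  have hanti := antitone_dampedEnergy hg hc.le hx
  have hstrict : StrictAntiOn (fun t => dampedEnergy g (x t)) (Iic 0) := by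
    refine strictAntiOn_of_hasDerivWithinAt_neg (convex_Iic 0)
      (fun s _ => (hasDerivAt_dampedEnergy hg hx s).continuousAt.continuousWithinAt)
      (fun s _ => (hasDerivAt_dampedEnergy hg hx s).hasDerivWithinAt) fun s hs => ?_
    rw [interior_Iic] at hs
    exact mul_neg_of_neg_of_pos (neg_lt_zero.2 hc) (sq_pos_of_ne_zero (hsnd s hs.le))
  have hlimE : Tendsto (fun t => dampedEnergy g (x t)) atBot (𝓝 0) := by
    simpa [dampedEnergy, Function.comp_def] using
      ((continuous_dampedEnergy hg).tendsto 0).comp hlim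
  calc dampedEnergy g (x t) ≤ dampedEnergy g (x (min t 0)) := hanti (min_le_left t 0)
    _ < dampedEnergy g (x (min t 0 - 1)) :=
      hstrict (by simp) (by simp) (sub_one_lt _)
    _ ≤ 0 := hanti.ge_of_tendsto hlimE _

theorem fst_mem_Ioo_of_dampedEnergy_neg {W : ℝ} (hx : Continuous x)
    (hE : ∀ t, dampedEnergy g (x t) < 0) (hW : ∫ z in (0)..W, g z ≤ 0) {t₀ : ℝ}
    (ht₀ : (x t₀).1 ∈ Ioo 0 W) (t : ℝ) : (x t).1 ∈ Ioo 0 W := by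
  have hfst : Continuous fun t => (x t).1 := continuous_fst.comp hx
  have hbarrier : ∀ w, ∫ z in (0)..w, g z ≤ 0 → w ∉ range fun t => (x t).1 := by
    rintro w hw ⟨s, rfl⟩
    have := hE s
    unfold dampedEnergy at this
    nlinarith [sq_nonneg (x s).2]
  constructor <;> by_contra! h
  · exact hbarrier 0 (by simp) (mem_range_of_exists_le_of_exists_ge hfst ⟨t, h⟩ ⟨t₀, ht₀.1.le⟩)
  · exact hbarrier W hW (mem_range_of_exists_le_of_exists_ge hfst ⟨t₀, ht₀.2.le⟩ ⟨t, h⟩)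

theorem isCompact_fst_mem_Icc_dampedEnergy_le (hg : Continuous g) (a b e : ℝ) :
    IsCompact {p : ℝ × ℝ | p.1 ∈ Icc a b ∧ dampedEnergy g p ≤ e} := by
  have hpotential : Continuous fun w => ∫ z in (0)..w, g z :=
    intervalIntegral.continuous_primitive (fun _ _ => hg.intervalIntegrable _ _) 0
  obtain ⟨B, hB⟩ := isCompact_Icc.bddAbove_image (hpotential.continuousOn (s := Icc a b))
  have hclosed : IsClosed {p : ℝ × ℝ | p.1 ∈ Icc a b ∧ dampedEnergy g p ≤ e} :=
    (isClosed_Icc.preimage continuous_fst).inter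
      (isClosed_le (continuous_dampedEnergy hg) continuous_const)
  refine (isCompact_Icc.prod (isCompact_Icc (a := -√(2 * (e + B))) (b := √(2 * (e + B)))))
    |>.of_isClosed_subset hclosed fun p hp => ⟨hp.1, abs_le.1 (Real.abs_le_sqrt ?_)⟩
  have := hB (mem_image_of_mem _ hp.1)
  have := hp.2
  unfold dampedEnergy at this
  linarith

/-- LaSalle's principle, in which Barbalat's lemma is applied to the energy and then to `v`. -/
theorem tendsto_atTop_of_unique_equilibrium (hg : Continuous g) (hc : 0 < c)
    (hx : IsIntegralCurve x fun _ => dampedField g c) {K : Set (ℝ × ℝ)} (hK : IsCompact K)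
    (hxK : ∀ t, x t ∈ K) {q₀ : ℝ × ℝ} (huniq : ∀ q ∈ K, q.2 = 0 → g q.1 = 0 →
      dampedEnergy g q ≤ dampedEnergy g (x 0) → q = q₀) : Tendsto x atTop (𝓝 q₀) := by
  have hE := continuous_dampedEnergy hg
  have hX : Continuous (dampedField g c) := by unfold dampedField; fun_prop
  have hanti := antitone_dampedEnergy hg hc.le hx
  obtain ⟨e, he⟩ : ∃ e, Tendsto (fun t => dampedEnergy g (x t)) atTop (𝓝 e) :=
    ⟨_, tendsto_atTop_ciInf hanti ((hK.bddBelow_image hE.continuousOn).mono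
      (range_subset_iff.2 fun t => mem_image_of_mem _ (hxK t)))⟩
  have hsnd : Tendsto (fun t => (x t).2) atTop (𝓝 0) := by
    have := tendsto_zero_of_isIntegralCurve_mem_of_hasDerivAt (G := fun p : ℝ × ℝ => -c * p.2 ^ 2)
      hX hx hK hxK (by fun_prop) (hasDerivAt_dampedEnergy hg hx) he
    have hsq : Tendsto (fun t => (x t).2 ^ 2) atTop (𝓝 0) := by
      simpa [hc.ne'] using this.div_const (-c)
    refine (tendsto_zero_iff_abs_tendsto_zero _).2 ?_
    simpa [Real.sqrt_sq_eq_abs, Function.comp_def] using hsq.sqrt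
  have hforce : Tendsto (fun t => g (x t).1) atTop (𝓝 0) := by
    have := tendsto_zero_of_isIntegralCurve_mem_of_hasDerivAt
      (G := fun p : ℝ × ℝ => g p.1 - c * p.2) hX hx hK hxK (by fun_prop)
      (hasDerivAt_snd_of_dampedField hx) hsnd
    simpa using this.add (hsnd.const_mul c)
  refine hK.tendsto_nhds_of_unique_mapClusterPt (Eventually.of_forall hxK) fun q hqK hq => ?_
  have hcluster {G : ℝ × ℝ → ℝ} (hG : Continuous G) : MapClusterPt (G q) atTop fun t => G (x t) :=
    hq.continuousAt_comp hG.continuousAt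
  refine huniq q hqK (eq_of_mapClusterPt_of_tendsto (hcluster continuous_snd) hsnd)
    (eq_of_mapClusterPt_of_tendsto (hcluster (hg.comp continuous_fst)) hforce) ?_
  exact eq_of_mapClusterPt_of_tendsto (hcluster hE) he ▸ hanti.le_of_tendsto he 0

theorem exists_heteroclinic_of_lipschitzWith {K : ℝ≥0} (hg₁ : ContDiff ℝ 1 g)
    (hgK : LipschitzWith K g) (hc : 0 < c) (hg0 : g 0 = 0) (hg'0 : 0 < deriv g 0) {W w₀ : ℝ}
    (hzero : Ioo 0 W ∩ g ⁻¹' {0} = {w₀}) (hW : ∫ z in (0)..W, g z ≤ 0) :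
    ∃ x : ℝ → ℝ × ℝ, (IsIntegralCurve x fun _ => dampedField g c) ∧ Tendsto x atBot (𝓝 0) ∧
      Tendsto x atTop (𝓝 (w₀, 0)) ∧ ∀ t, (x t).1 ∈ Ioo 0 W := by
  have hg := hg₁.continuous
  have hW₀ : 0 < W := by
    have hw₀ : w₀ ∈ Ioo 0 W := (hzero.symm.subset rfl).1
    exact hw₀.1.trans hw₀.2
  obtain ⟨x, hx, hpos, hbot⟩ := exists_dampedField_tendsto_zero_atBot hg₁ hgK hg0 hg'0 c
  have hE := dampedEnergy_neg_of_tendsto_zero_atBot hg hc hx hbot fun t ht => (hpos t ht).2.ne'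
  obtain ⟨t₀, ht₀W, ht₀⟩ := (((continuous_fst.tendsto (0 : ℝ × ℝ)).comp hbot
    |>.eventually_lt_const hW₀).and (eventually_le_atBot 0)).exists
  have hIoo := fst_mem_Ioo_of_dampedEnergy_neg hx.continuous hE hW ⟨(hpos t₀ ht₀).1, ht₀W⟩
  refine ⟨x, hx, hbot, ?_, hIoo⟩
  refine tendsto_atTop_of_unique_equilibrium hg hc hx
    (isCompact_fst_mem_Icc_dampedEnergy_le hg 0 W 0)
    (fun t => ⟨Ioo_subset_Icc_self (hIoo t), (hE t).le⟩) fun q hq hq₂ hq₁ hqE => ?_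
  have hqE' : 0 < ∫ z in (0)..q.1, g z := by
    have := hqE.trans_lt (hE 0)
    rw [dampedEnergy, hq₂] at this
    linarith
  have hq_ne₀ : q.1 ≠ 0 := fun h => by simp [h] at hqE'
  have hq_neW : q.1 ≠ W := fun h => (h ▸ hqE').not_ge hW
  have hqw₀ : q.1 = w₀ := hzero.subset
    ⟨⟨hq.1.1.lt_of_ne' hq_ne₀, hq.1.2.lt_of_ne hq_neW⟩, hq₁⟩
  exact Prod.ext hqw₀ hq₂

theorem exists_heteroclinic {h : ℝ → ℝ} (hh₁ : ContDiff ℝ 1 h) (hc : 0 < c) (hh0 : h 0 = 0)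
    (hh'0 : 0 < deriv h 0) {W w₀ : ℝ} (hzero : Ioo 0 W ∩ h ⁻¹' {0} = {w₀})
    (hW : ∫ z in (0)..W, h z ≤ 0) :
    ∃ x : ℝ → ℝ × ℝ, (IsIntegralCurve x fun _ => dampedField h c) ∧ Tendsto x atBot (𝓝 0) ∧
      Tendsto x atTop (𝓝 (w₀, 0)) := by
  have hW₀ : 0 < W := by
    have hw₀ : w₀ ∈ Ioo 0 W := (hzero.symm.subset rfl).1
    exact hw₀.1.trans hw₀.2
  obtain ⟨g, hg₁, ⟨K, hgK⟩, hgh⟩ := exists_lipschitzWith_eqOn_closedBall hh₁ 0 hW₀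
  have hgh_Icc : EqOn g h (Icc 0 W) := fun w hw => hgh (by
    rw [mem_closedBall_zero_iff, Real.norm_of_nonneg hw.1]; exact hw.2)
  have hderiv : deriv g 0 = deriv h 0 :=
    (hgh.eventuallyEq_of_mem (Metric.closedBall_mem_nhds 0 hW₀)).deriv_eq
  have hzero_g : Ioo 0 W ∩ g ⁻¹' {0} = {w₀} := by
    rw [← hzero]
    exact (hgh_Icc.mono Ioo_subset_Icc_self).inter_preimage_eq {0}
  have hW_g : ∫ z in (0)..W, g z ≤ 0 := by
    rwa [intervalIntegral.integral_congr (uIcc_of_le hW₀.le ▸ hgh_Icc)]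
  obtain ⟨x, hx, hbot, htop, hIoo⟩ := exists_heteroclinic_of_lipschitzWith hg₁ hgK hc
    ((hgh_Icc (left_mem_Icc.2 hW₀.le)).trans hh0) (hderiv ▸ hh'0) hzero_g hW_g
  refine ⟨x, fun t => (hx t).congr_deriv ?_, hbot, htop⟩
  simp only [dampedField, hgh_Icc (Ioo_subset_Icc_self (hIoo t))]

/-- The Riccati variable `r = z' / z` satisfies `r' ≤ -(r + c / 2)² - ω²` with `ω² = b - c² / 4`, so
the angle `arctan ((r + c / 2) / ω)` would decrease at least at the rate `ω` forever. -/
theorem exists_nonpos_of_oscillatory {z z' z'' : ℝ → ℝ} {b T : ℝ}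
    (hz : ∀ t, HasDerivAt z (z' t) t) (hz' : ∀ t, HasDerivAt z' (z'' t) t) (hb : c ^ 2 / 4 < b)
    (h : ∀ t ≥ T, z'' t + c * z' t + b * z t ≤ 0) : ∃ t ≥ T, z t ≤ 0 := by
  by_contra! hpos
  set ω := √(b - c ^ 2 / 4)
  have hω₀ : 0 < ω := Real.sqrt_pos.2 (sub_pos.2 hb)
  have hω_sq : ω ^ 2 = b - c ^ 2 / 4 := Real.sq_sqrt (sub_pos.2 hb).le
  set θ : ℝ → ℝ := fun t => Real.arctan ((z' t / z t + c / 2) / ω)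
  have hθ : ∀ t ≥ T, HasDerivAt θ (1 / (1 + ((z' t / z t + c / 2) / ω) ^ 2) *
      ((z'' t * z t - z' t * z' t) / z t ^ 2 / ω)) t := fun t ht =>
    ((((hz' t).fun_div (hz t) (hpos t ht).ne').add_const (c / 2)).div_const ω).arctan
  have hriccati : ∀ t ≥ T, (z'' t * z t - z' t * z' t) / z t ^ 2 ≤
      -((z' t / z t + c / 2) ^ 2 + ω ^ 2) := fun t ht => by
    have hzt := hpos t ht
    have hexpand : -((z' t / z t + c / 2) ^ 2 + (b - c ^ 2 / 4)) * z t ^ 2 =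
        -z' t ^ 2 - (c * z' t + b * z t) * z t := by
      field_simp
      ring
    rw [hω_sq, div_le_iff₀ (by positivity), hexpand]
    nlinarith [h t ht]
  have hθ_le : ∀ t ≥ T, deriv θ t ≤ -ω := fun t ht => by
    rw [(hθ t ht).deriv, one_div, inv_mul_eq_div, div_le_iff₀ (by positivity), div_le_iff₀ hω₀]
    refine (hriccati t ht).trans_eq ?_
    generalize z' t / z t + c / 2 = r
    field_simp
    ring
  have hdrop : θ (T + Real.pi / ω) - θ T ≤ -ω * (T + Real.pi / ω - T) := by
    refine (convex_Ici T).image_sub_le_mul_sub_of_deriv_le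
      (fun t ht => (hθ t ht).continuousAt.continuousWithinAt)
      (fun t ht => (hθ t (interior_subset ht)).differentiableAt.differentiableWithinAt)
      (fun t ht => hθ_le t (interior_subset ht)) T self_mem_Ici _ (mem_Ici.2 ?_) ?_
    all_goals exact le_add_of_nonneg_right (by positivity)
  rw [add_sub_cancel_left, neg_mul, mul_div_cancel₀ _ hω₀.ne'] at hdrop
  have hlower : -(Real.pi / 2) < θ (T + Real.pi / ω) := Real.neg_pi_div_two_lt_arctan _
  have hupper : θ T < Real.pi / 2 := Real.arctan_lt_pi_div_two _
  linarith

theorem exists_fst_ge_of_spiral (hx : IsIntegralCurve x fun _ => dampedField g c)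
    {w₀ : ℝ} (hlim : Tendsto (fun t => (x t).1) atTop (𝓝 w₀)) (hg₀ : g w₀ = 0)
    (hspiral : deriv g w₀ < -(c ^ 2 / 4)) : ∃ t, w₀ ≤ (x t).1 := by
  by_contra! hlt
  obtain ⟨b, hcb, hb⟩ := exists_between (lt_neg_of_lt_neg hspiral)
  have hderiv : HasDerivAt (fun u => g (w₀ - u)) (-deriv g w₀) 0 := by
    have hdiff : DifferentiableAt ℝ g w₀ :=
      differentiableAt_of_deriv_ne_zero (by nlinarith [sq_nonneg c])
    have : HasDerivAt g (deriv g w₀) (w₀ - 0) := by simpa using hdiff.hasDerivAt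
    exact this.comp_const_sub w₀ 0
  have hgap : Tendsto (fun t => w₀ - (x t).1) atTop (𝓝[≥] 0) :=
    tendsto_nhdsWithin_iff.2 ⟨by simpa using hlim.const_sub w₀,
      Eventually.of_forall fun t => (sub_pos.2 (hlt t)).le⟩
  obtain ⟨T, hT⟩ := eventually_atTop.1
    (hgap.eventually (eventually_add_mul_sub_le_of_lt_deriv hderiv hb))
  obtain ⟨t, -, ht⟩ := exists_nonpos_of_oscillatory (c := c) (T := T)
    (fun t => (hasDerivAt_fst_of_dampedField hx t).const_sub w₀)
    (fun t => (hasDerivAt_snd_of_dampedField hx t).neg) hcb fun t ht => by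
      have := hT t ht
      simp only [sub_zero, hg₀, zero_add, sub_sub_cancel] at this ⊢
      linarith
  exact (hlt t).not_ge (sub_nonpos.1 ht)

theorem not_monotone_fst_of_spiral (hg₁ : ContDiff ℝ 1 g)
    (hx : IsIntegralCurve x fun _ => dampedField g c) {w₀ : ℝ}
    (hlim : Tendsto (fun t => (x t).1) atTop (𝓝 w₀)) (hg₀ : g w₀ = 0)
    (hspiral : deriv g w₀ < -(c ^ 2 / 4)) (hne : ∃ t, (x t).1 ≠ w₀) :
    ¬Monotone fun t => (x t).1 := by
  intro hmono
  obtain ⟨t₀, ht₀⟩ := exists_fst_ge_of_spiral hx hlim hg₀ hspiral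
  have hfst : ∀ t ≥ t₀, (x t).1 = w₀ := fun t ht =>
    le_antisymm (hmono.ge_of_tendsto hlim t) (ht₀.trans (hmono ht))
  have hsnd : (x (t₀ + 1)).2 = 0 := by
    refine (hasDerivAt_fst_of_dampedField hx (t₀ + 1)).unique
      ((hasDerivAt_const _ w₀).congr_of_eventuallyEq ?_)
    filter_upwards [lt_mem_nhds (lt_add_one t₀)] with t ht using hfst t ht.le
  have hconst : x = fun _ => (w₀, 0) :=
    isIntegralCurve_eq_of_contDiff (contDiff_dampedField hg₁ c) hx
      (isIntegralCurve_const fun _ => by simp [dampedField, hg₀]) (t₀ := t₀ + 1)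
      (Prod.ext (hfst _ (by linarith)) hsnd)
  obtain ⟨t, ht⟩ := hne
  exact ht (by rw [hconst])

end DampedEquation

section LogarithmicVariable
open Set

/-- The force `h` for which `w = log (P₀ / P)` obeys the damped equation `w'' = h(w) - a σ w'` when
`P' = a Q` and `Q' = f(P) - a σ Q + a Q² / P`: the change of variable absorbs the term
`a Q² / P`. -/
noncomputable def logForce (f : ℝ → ℝ) (a P₀ w : ℝ) : ℝ :=
  -a * (f (P₀ * Real.exp (-w)) / (P₀ * Real.exp (-w)))

variable {f : ℝ → ℝ} {a c σ P₀ w : ℝ}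

theorem hasDerivAt_mul_exp_neg (P₀ : ℝ) {w : ℝ → ℝ} {v t : ℝ} (hw : HasDerivAt w v t) :
    HasDerivAt (fun t => P₀ * Real.exp (-w t)) (-(P₀ * Real.exp (-w t) * v)) t :=
  (hw.neg.exp.const_mul P₀).congr_deriv (by simp only [Pi.neg_apply]; ring)

theorem mul_exp_neg_log_div {P₁ : ℝ} (hP₀ : 0 < P₀) (hP₁ : 0 < P₁) :
    P₀ * Real.exp (-Real.log (P₀ / P₁)) = P₁ := by
  rw [← Real.log_inv, Real.exp_log (by positivity)]
  field_simp

theorem contDiff_logForce (hf : ContDiffOn ℝ 1 f (Ioi 0)) (a : ℝ) (hP₀ : 0 < P₀) :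
    ContDiff ℝ 1 (logForce f a P₀) := by
  have hP : ContDiff ℝ 1 fun w => P₀ * Real.exp (-w) := by fun_prop
  have hpos : ∀ w, 0 < P₀ * Real.exp (-w) := fun w => by positivity
  exact contDiff_const.mul ((hf.comp_contDiff hP hpos).div hP fun w => (hpos w).ne')

theorem logForce_eq_zero_iff (ha : a ≠ 0) (hP₀ : P₀ ≠ 0) :
    logForce f a P₀ w = 0 ↔ f (P₀ * Real.exp (-w)) = 0 := by
  simp [logForce, ha, hP₀]

theorem deriv_logForce (hf : DifferentiableAt ℝ f (P₀ * Real.exp (-w))) (hP₀ : P₀ ≠ 0)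
    (hzero : f (P₀ * Real.exp (-w)) = 0) :
    deriv (logForce f a P₀) w = a * deriv f (P₀ * Real.exp (-w)) := by
  have hP := hasDerivAt_mul_exp_neg P₀ (hasDerivAt_id' w)
  have hP_ne : P₀ * Real.exp (-w) ≠ 0 := by positivity
  refine (((hf.hasDerivAt.comp w hP).fun_div hP hP_ne).const_mul (-a)).deriv.trans ?_
  simp only [Function.comp_apply, hzero]
  field_simp
  ring

theorem tendsto_logForce_atTop (hf : Tendsto (fun P => f P / P) (𝓝[>] 0) atTop) (ha : 0 < a)
    (hP₀ : 0 < P₀) : Tendsto (logForce f a P₀) atTop atBot := by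
  have hP : Tendsto (fun w => P₀ * Real.exp (-w)) atTop (𝓝[>] 0) := by
    refine tendsto_nhdsWithin_iff.2 ⟨?_, Eventually.of_forall fun w => mem_Ioi.2 (by positivity)⟩
    simpa using (Real.tendsto_exp_neg_atTop_nhds_zero).const_mul P₀
  exact (hf.comp hP).const_mul_atTop_of_neg (neg_neg_of_pos ha)

theorem hasDerivAt_flux_of_dampedField_logForce {x : ℝ → ℝ × ℝ} (ha : a ≠ 0) (hP₀ : P₀ ≠ 0)
    (hx : IsIntegralCurve x fun _ => dampedField (logForce f a P₀) (a * σ)) (t : ℝ) :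
    let P := fun t => P₀ * Real.exp (-(x t).1)
    let Q := fun t => -(P t * (x t).2) / a
    HasDerivAt Q (f (P t) - a * σ * Q t + a * Q t ^ 2 / P t) t := by
  intro P Q
  have hP := hasDerivAt_mul_exp_neg P₀ (hasDerivAt_fst_of_dampedField hx t)
  have hP_ne : P t ≠ 0 := by positivity
  refine (((hP.fun_mul (hasDerivAt_snd_of_dampedField hx t)).neg).div_const a).congr_deriv ?_
  simp only [logForce, Q]
  change -(-(P t * (x t).2) * (x t).2 + P t * (-a * (f (P t) / P t) - a * σ * (x t).2)) / a = _
  field_simp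
  ring

theorem Ioo_inter_logForce_preimage_zero (ha : a ≠ 0) (hP₀ : 0 < P₀) {P₁ W : ℝ}
    (hzero : Ioo 0 P₀ ∩ f ⁻¹' {0} = {P₁}) (hW : Real.log (P₀ / P₁) < W) :
    Ioo 0 W ∩ logForce f a P₀ ⁻¹' {0} = {Real.log (P₀ / P₁)} := by
  have hP₁ : P₁ ∈ Ioo 0 P₀ ∩ f ⁻¹' {0} := hzero ▸ rfl
  refine Subset.antisymm (fun w hw => ?_) (singleton_subset_iff.2 ?_)
  · have hmem : P₀ * Real.exp (-w) ∈ Ioo 0 P₀ ∩ f ⁻¹' {0} :=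
      ⟨⟨by positivity, mul_lt_of_lt_one_right hP₀ (Real.exp_lt_one_iff.2 (neg_lt_zero.2 hw.1.1))⟩,
        (logForce_eq_zero_iff ha hP₀.ne').1 hw.2⟩
    rw [hzero, mem_singleton_iff] at hmem
    rw [mem_singleton_iff, ← hmem, div_mul_cancel_left₀ hP₀.ne', ← Real.exp_neg, neg_neg,
      Real.log_exp]
  · refine ⟨⟨Real.log_pos ((one_lt_div hP₁.1.1).2 hP₁.1.2), hW⟩, ?_⟩
    rw [mem_preimage, mem_singleton_iff, logForce_eq_zero_iff ha hP₀.ne',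
      mul_exp_neg_log_div hP₀ hP₁.1.1]
    exact hP₁.2

theorem exists_heteroclinic_logForce (hf : ContDiffOn ℝ 1 f (Ioi 0)) (ha : 0 < a) (hc : 0 < c)
    (hP₀ : 0 < P₀) (hroot : f P₀ = 0) (hderiv : 0 < deriv f P₀) {P₁ : ℝ}
    (hzero : Ioo 0 P₀ ∩ f ⁻¹' {0} = {P₁}) (hlim : Tendsto (fun P => f P / P) (𝓝[>] 0) atTop) :
    ∃ x : ℝ → ℝ × ℝ, (IsIntegralCurve x fun _ => dampedField (logForce f a P₀) c) ∧
      Tendsto x atBot (𝓝 0) ∧ Tendsto x atTop (𝓝 (Real.log (P₀ / P₁), 0)) := by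
  have hh := contDiff_logForce hf a hP₀
  have hdiff : DifferentiableAt ℝ f P₀ := differentiableAt_of_deriv_ne_zero hderiv.ne'
  have hh0 : logForce f a P₀ 0 = 0 :=
    (logForce_eq_zero_iff ha.ne' hP₀.ne').2 (by simpa using hroot)
  have hh'0 : 0 < deriv (logForce f a P₀) 0 := by
    rw [deriv_logForce (by simpa using hdiff) hP₀.ne' (by simpa using hroot)]
    simpa using mul_pos ha hderiv
  obtain ⟨W, hW, hWint⟩ := exists_gt_integral_nonpos hh.continuous
    (tendsto_logForce_atTop hlim ha hP₀) (Real.log (P₀ / P₁))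
  exact exists_heteroclinic hh hc hh0 hh'0
    (Ioo_inter_logForce_preimage_zero ha.ne' hP₀ hzero hW) hWint

theorem not_antitone_mul_exp_neg_of_spiral (hf : ContDiffOn ℝ 1 f (Ioi 0)) (ha : 0 < a)
    {x : ℝ → ℝ × ℝ} (hx : IsIntegralCurve x fun _ => dampedField (logForce f a P₀) (a * σ))
    {P₁ : ℝ} (hP₁ : 0 < P₁) (hP₁₀ : P₁ < P₀) (hroot : f P₁ = 0)
    (hspiral : deriv f P₁ < -(a * σ ^ 2 / 4)) (hbot : Tendsto x atBot (𝓝 0))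
    (htop : Tendsto x atTop (𝓝 (Real.log (P₀ / P₁), 0))) :
    ¬Antitone fun t => P₀ * Real.exp (-(x t).1) := by
  intro hanti
  have hP₀ : 0 < P₀ := hP₁.trans hP₁₀
  have hexp_log := mul_exp_neg_log_div hP₀ hP₁
  have hmono : Monotone fun t => (x t).1 := fun t₁ t₂ ht => by simpa [hP₀] using hanti ht
  have hlog : 0 < Real.log (P₀ / P₁) := Real.log_pos ((one_lt_div hP₁).2 hP₁₀)
  have hzero_log : logForce f a P₀ (Real.log (P₀ / P₁)) = 0 :=
    (logForce_eq_zero_iff ha.ne' hP₀.ne').2 (hexp_log.symm ▸ hroot)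
  have hdiff : DifferentiableAt ℝ f P₁ :=
    (hf.differentiableOn one_ne_zero).differentiableAt (Ioi_mem_nhds hP₁)
  refine not_monotone_fst_of_spiral (contDiff_logForce hf a hP₀) hx htop.fst_nhds hzero_log ?_
    ((hbot.fst_nhds.eventually_lt_const hlog).exists.imp fun _ => ne_of_lt) hmono
  rw [deriv_logForce (hexp_log.symm ▸ hdiff) hP₀.ne' (hexp_log.symm ▸ hroot), hexp_log]
  linarith [mul_lt_mul_of_pos_left hspiral ha]

theorem exists_oscillatory_profile (hf : ContDiffOn ℝ 1 f (Ioi 0)) (ha : 0 < a) (hσ : 0 < σ)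
    (hP₀ : 0 < P₀) (hroot : f P₀ = 0) (hderiv : 0 < deriv f P₀) {P₁ : ℝ}
    (hzero : Ioo 0 P₀ ∩ f ⁻¹' {0} = {P₁}) (hspiral : deriv f P₁ < -(a * σ ^ 2 / 4))
    (hlim : Tendsto (fun P => f P / P) (𝓝[>] 0) atTop) :
    ∃ P Q : ℝ → ℝ, (∀ y, 0 < P y) ∧ (∀ y, HasDerivAt P (a * Q y) y) ∧
      (∀ y, HasDerivAt Q (f (P y) - a * σ * Q y + a * Q y ^ 2 / P y) y) ∧
      Tendsto (fun y => (P y, Q y)) atBot (𝓝 (P₀, 0)) ∧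
      Tendsto (fun y => (P y, Q y)) atTop (𝓝 (P₁, 0)) ∧ ¬Monotone P ∧ ¬Antitone P := by
  have hP₁ : P₁ ∈ Ioo 0 P₀ ∩ f ⁻¹' {0} := hzero ▸ rfl
  obtain ⟨x, hx, hbot, htop⟩ :=
    exists_heteroclinic_logForce hf ha (mul_pos ha hσ) hP₀ hroot hderiv hzero hlim
  set P : ℝ → ℝ := fun y => P₀ * Real.exp (-(x y).1)
  set Q : ℝ → ℝ := fun y => -(P y * (x y).2) / a
  have hPQ : ∀ {l : Filter ℝ} {w : ℝ}, Tendsto x l (𝓝 (w, 0)) →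
      Tendsto (fun y => (P y, Q y)) l (𝓝 (P₀ * Real.exp (-w), 0)) := fun {l w} hxl => by
    have hcont : Continuous fun p : ℝ × ℝ =>
        (P₀ * Real.exp (-p.1), -(P₀ * Real.exp (-p.1) * p.2) / a) := by fun_prop
    simpa [Function.comp_def] using (hcont.tendsto (w, 0)).comp hxl
  have hPQ_bot : Tendsto (fun y => (P y, Q y)) atBot (𝓝 (P₀, 0)) := by simpa using hPQ hbot
  have hPQ_top : Tendsto (fun y => (P y, Q y)) atTop (𝓝 (P₁, 0)) :=
    mul_exp_neg_log_div hP₀ hP₁.1.1 ▸ hPQ htop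
  refine ⟨P, Q, fun y => by positivity, fun y => ?_, fun y =>
    hasDerivAt_flux_of_dampedField_logForce ha.ne' hP₀.ne' hx y, hPQ_bot, hPQ_top,
    fun hmono => ?_,
    not_antitone_mul_exp_neg_of_spiral hf ha hx hP₁.1.1 hP₁.1.2 hP₁.2 hspiral hbot htop⟩
  · exact (hasDerivAt_mul_exp_neg P₀ (hasDerivAt_fst_of_dampedField hx y)).congr_deriv
      (mul_div_cancel₀ _ ha.ne').symm
  · exact hP₁.1.2.not_ge ((hmono.le_of_tendsto hPQ_bot.fst_nhds 0).trans
      (hmono.ge_of_tendsto hPQ_top.fst_nhds 0))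

end LogarithmicVariable

section ProfileForce
open Set

/-- The force `f` of the traveling wave system for the pressure law `P ^ γ`; the profiles connect
two of its zeros, which determine `C₁` and `C₂`. -/
noncomputable def profileForce (γ C₁ C₂ P : ℝ) : ℝ := P ^ γ - C₁ + C₂ / P

variable {γ C₁ C₂ : ℝ}

theorem strictConvexOn_rpow_sub_mul_add (hγ : 0 < γ) (C₁ C₂ : ℝ) :
    StrictConvexOn ℝ (Ici 0) fun P : ℝ => P ^ (γ + 1) - C₁ * P + C₂ := by
  have haffine : ConvexOn ℝ (Ici 0) fun P : ℝ => -C₁ * P + C₂ :=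
    ((LinearMap.mulLeft ℝ (-C₁)).convexOn (convex_Ici 0)).add_const C₂
  exact ((strictConvexOn_rpow (lt_add_of_pos_left 1 hγ)).add_convexOn haffine).congr
    fun P _ => by simp only [Pi.add_apply]; ring

theorem mul_profileForce {P : ℝ} (hP : 0 < P) :
    P * profileForce γ C₁ C₂ P = P ^ (γ + 1) - C₁ * P + C₂ := by
  rw [profileForce, Real.rpow_add_one hP.ne']
  field_simp

theorem contDiffOn_profileForce : ContDiffOn ℝ 1 (profileForce γ C₁ C₂) (Ioi 0) := by
  unfold profileForce
  fun_prop (disch := intro x hx; exact (mem_Ioi.1 hx).ne')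

theorem Ioo_inter_profileForce_preimage_zero (hγ : 0 < γ) {Pp Pm : ℝ} (hPp : 0 < Pp)
    (hPpPm : Pp < Pm) (hroot1 : profileForce γ C₁ C₂ Pp = 0)
    (hroot2 : profileForce γ C₁ C₂ Pm = 0) :
    Ioo 0 Pm ∩ profileForce γ C₁ C₂ ⁻¹' {0} = {Pp} := by
  have hq := strictConvexOn_rpow_sub_mul_add hγ C₁ C₂
  have hPm := hPp.trans hPpPm
  have hq_eq_zero {P : ℝ} (hP : 0 < P) (h : profileForce γ C₁ C₂ P = 0) :
      P ^ (γ + 1) - C₁ * P + C₂ = 0 := by rw [← mul_profileForce hP, h, mul_zero]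
  refine Subset.antisymm (fun P ⟨hP, hroot⟩ => ?_)
    (singleton_subset_iff.2 ⟨⟨hPp, hPpPm⟩, hroot1⟩)
  rcases lt_trichotomy P Pp with hlt | heq | hgt
  · exact absurd (hq_eq_zero hP.1 hroot) (pos_of_strictConvexOn_of_lt hq hP.1.le hPm.le hlt hPpPm
      (hq_eq_zero hPp hroot1) (hq_eq_zero hPm hroot2)).ne'
  · exact heq
  · exact absurd (hq_eq_zero hP.1 hroot) (neg_of_strictConvexOn_of_mem_Ioo hq hPp.le hPm.le
      ⟨hgt, hP.2⟩ (hq_eq_zero hPp hroot1) (hq_eq_zero hPm hroot2)).ne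

theorem deriv_profileForce_pos (hγ : 0 < γ) {Pp Pm : ℝ} (hPp : 0 < Pp) (hPpPm : Pp < Pm)
    (hroot1 : profileForce γ C₁ C₂ Pp = 0) (hroot2 : profileForce γ C₁ C₂ Pm = 0) :
    0 < deriv (profileForce γ C₁ C₂) Pm := by
  have hPm := hPp.trans hPpPm
  have hdiff : DifferentiableAt ℝ (profileForce γ C₁ C₂) Pm :=
    (contDiffOn_profileForce.differentiableOn one_ne_zero).differentiableAt (Ioi_mem_nhds hPm)
  have hq_deriv : HasDerivAt (fun P => P ^ (γ + 1) - C₁ * P + C₂)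
      (Pm * deriv (profileForce γ C₁ C₂) Pm) Pm := by
    refine (((hasDerivAt_id' Pm).fun_mul hdiff.hasDerivAt).congr_deriv (by simp [hroot2]))
      |>.congr_of_eventuallyEq ?_
    filter_upwards [Ioi_mem_nhds hPm] with P hP using (mul_profileForce hP).symm
  have hslope := (strictConvexOn_rpow_sub_mul_add hγ C₁ C₂).slope_lt_of_hasDerivAt hPp.le hPm.le
    hPpPm hq_deriv
  rw [slope_def_field, ← mul_profileForce hPp, ← mul_profileForce hPm, hroot1, hroot2] at hslope
  exact pos_of_mul_pos_right (by simpa using hslope) hPm.le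

theorem tendsto_profileForce_div_atTop (hγ : 0 < γ) {Pp Pm : ℝ} (hPp : 0 < Pp) (hPpPm : Pp < Pm)
    (hroot1 : profileForce γ C₁ C₂ Pp = 0) (hroot2 : profileForce γ C₁ C₂ Pm = 0) :
    Tendsto (fun P => profileForce γ C₁ C₂ P / P) (𝓝[>] 0) atTop := by
  have hC₂ : 0 < C₂ := by
    have hPm := hPp.trans hPpPm
    have := pos_of_strictConvexOn_of_lt (strictConvexOn_rpow_sub_mul_add hγ C₁ C₂)
      self_mem_Ici hPm.le hPp hPpPm (by rw [← mul_profileForce hPp, hroot1, mul_zero])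
      (by rw [← mul_profileForce hPm, hroot2, mul_zero])
    simpa [Real.zero_rpow (by positivity : γ + 1 ≠ 0)] using this
  have hq_lim : Tendsto (fun P : ℝ => P ^ (γ + 1) - C₁ * P + C₂) (𝓝[>] 0) (𝓝 C₂) := by
    have hcont : Continuous fun P : ℝ => P ^ (γ + 1) - C₁ * P + C₂ := by
      have := Real.continuous_rpow_const (q := γ + 1) (by positivity)
      fun_prop
    simpa [Real.zero_rpow (by positivity : γ + 1 ≠ 0)] using
      (hcont.tendsto 0).mono_left nhdsWithin_le_nhds
  have hinv_sq : Tendsto (fun P : ℝ => P⁻¹ ^ 2) (𝓝[>] 0) atTop :=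
    (tendsto_pow_atTop two_ne_zero).comp tendsto_inv_nhdsGT_zero
  refine (hq_lim.pos_mul_atTop hC₂ hinv_sq).congr' ?_
  filter_upwards [self_mem_nhdsWithin] with P hP
  rw [← mul_profileForce hP]
  have := (mem_Ioi.1 hP).ne'
  field_simp

end ProfileForce

theorem stmt_10_general (γ s μ k Pp Pm C₁ C₂ : ℝ) (hγ : 0 < γ) (hs : 0 < s) (hμ : 0 < μ)
    (hk : 0 < k) (hPp : 0 < Pp) (hPpPm : Pp < Pm) (f : ℝ → ℝ)
    (hf : ∀ P : ℝ, f P = P ^ γ - C₁ + C₂ / P) (hroot1 : f Pp = 0) (hroot2 : f Pm = 0)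
    (hspiral : s * μ / k < Real.sqrt (-2 * deriv f Pp)) :
    ∃ P Q : ℝ → ℝ,
      (∀ y : ℝ, 0 < P y) ∧
      (∀ y : ℝ, HasDerivAt P (2 / k ^ 2 * Q y) y) ∧
      (∀ y : ℝ, HasDerivAt Q
        (f (P y) - 2 * μ * s / k ^ 2 * Q y + 2 / k ^ 2 * (Q y) ^ 2 / P y) y) ∧
      Tendsto (fun y => (P y, Q y)) atBot (𝓝 (Pm, 0)) ∧
      Tendsto (fun y => (P y, Q y)) atTop (𝓝 (Pp, 0)) ∧
      ¬ Monotone P ∧ ¬ Antitone P := by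
  obtain rfl : f = profileForce γ C₁ C₂ := funext hf
  have hspiral_sq : deriv (profileForce γ C₁ C₂) Pp < -(2 / k ^ 2 * (μ * s) ^ 2 / 4) := by
    have := (Real.lt_sqrt (by positivity)).1 hspiral
    have hsq : 2 / k ^ 2 * (μ * s) ^ 2 / 4 = (s * μ / k) ^ 2 / 2 := by ring
    linarith
  have hdamping : 2 * μ * s / k ^ 2 = 2 / k ^ 2 * (μ * s) := by ring
  rw [hdamping]
  exact exists_oscillatory_profile contDiffOn_profileForce (by positivity) (by positivity)
    (hPp.trans hPpPm) hroot2 (deriv_profileForce_pos hγ hPp hPpPm hroot1 hroot2)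
    (Ioo_inter_profileForce_preimage_zero hγ hPp hPpPm hroot1 hroot2) hspiral_sq
    (tendsto_profileForce_div_atTop hγ hPp hPpPm hroot1 hroot2)

/-- global existence of an oscillatory profile for `s > 0`: under the invariant
region condition `F₁ ≤ 0` on `(0, P⁺)` and the spiral-point condition
`sμ/k < √(−2f'(P⁺))`, there is a heteroclinic from `(P⁻,0)` to `(P⁺,0)` whose `P`-component
is neither monotone nondecreasing nor monotone nonincreasing on `ℝ`. -/
theorem stmt_10 (γ s μ k Pp Pm C₁ C₂ : ℝ) (hγ : 1 ≤ γ) (hs : 0 < s) (hμ : 0 < μ) (hk : 0 < k)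
    (hPp : 0 < Pp) (hPpPm : Pp < Pm)
    (hC₁ : C₁ = (Pp ^ (γ + 1) - Pm ^ (γ + 1)) / (Pp - Pm))
    (hC₂ : C₂ = Pp * Pm * ((Pp ^ γ - Pm ^ γ) / (Pp - Pm)))
    (f F : ℝ → ℝ)
    (hf : ∀ P : ℝ, f P = P ^ γ - C₁ + C₂ / P)
    (hroot1 : f Pp = 0) (hroot2 : f Pm = 0)
    (hF : ∀ P : ℝ, F P = P ^ (γ + 1) / (γ + 1) - C₁ * P + C₂ * Real.log P)
    (hF₁ : ∀ P : ℝ, 0 < P → P < Pp → F P - (s * μ * P / k) ^ 2 - F Pm ≤ 0)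
    (hspiral : s * μ / k < Real.sqrt (-2 * deriv f Pp)) :
    ∃ P Q : ℝ → ℝ,
      (∀ y : ℝ, 0 < P y) ∧
      (∀ y : ℝ, HasDerivAt P (2 / k ^ 2 * Q y) y) ∧
      (∀ y : ℝ, HasDerivAt Q
        (f (P y) - 2 * μ * s / k ^ 2 * Q y + 2 / k ^ 2 * (Q y) ^ 2 / P y) y) ∧
      Tendsto (fun y => (P y, Q y)) atBot (𝓝 (Pm, 0)) ∧
      Tendsto (fun y => (P y, Q y)) atTop (𝓝 (Pp, 0)) ∧
      ¬ Monotone P ∧ ¬ Antitone P :=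
  stmt_10_general γ s μ k Pp Pm C₁ C₂ (zero_lt_one.trans_le hγ) hs hμ hk hPp hPpPm f hf hroot1
    hroot2 hspiral
end

section
/- Let γ ≥ 1, s ∈ ℝ, μ, k > 0, A ∈ ℝ, let P : ℝ → (0,∞) be a smooth function and J = sP − A. Define f₁ = J²/P² − γP^{γ−1}, f₄ = k²·P'(√P)'/P^{3/2}, f₅ = 2k²(√P)'/√P, and assume the constants M₁ = sup_ℝ f₁², M₂ = sup_ℝ (f₁')², M₃ = sup_ℝ |(J/P)'|, M₄ = sup_ℝ f₄², M₅ = sup_ℝ f₅² are all finite. Suppose λ ∈ ℂ and ρ̃, J̃ : ℝ → ℂ are Schwartz functions, not both identically zero, satisfying λρ̃ = sρ̃' − J̃' and λJ̃ = sJ̃' + (f₁ρ̃)' − ((2J/P)·J̃)' + μJ̃'' + (k²/2)ρ̃''' − 2k²((√P)'·(ρ̃/√P)')'. Then for all ε₁, ε₂, ε₃ > 0 with ε₁/2 + ε₃/2 < μ, one has Re λ ≤ max(C₁, C₂, 2C₃/k²), where C₁ = 1/(2ε₁) + M₂/ε₂ + M₄/ε₃, C₂ = ε₂/2 + M₃,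 and C₃ = M₁/ε₂ + M₅/ε₃. -/
/-!
Both equations of the eigenvalue problem are conservation laws, `λ ρ = (s ρ - J)'` and `λ J = G'`.
Pairing them with `ρ` and `J`, and trading `J'` for `s ρ' - λ ρ` in the dispersive term, gives the
pointwise identity
`Re λ (|ρ|² + |J|² + k²/2 |ρ'|²) = (energy flux)' + production`.
Young's inequality bounds the production by `C₁ |ρ|² + C₂ |J|² + C₃ |ρ'|²`, the terms in `|J'|²`
being absorbed by the viscosity. If `Re λ` exceeded `C₁`, `C₂` and `2 C₃ / k²`, the energy flux
would thus be nondecreasing; since it vanishes at both ends of the line, it would be constant, and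
the perturbation zero.
-/

open Filter Topology
open scoped SchwartzMap

section Calculus

theorem eq_const_of_monotone_of_tendsto {α β : Type*} [Preorder α] [IsDirectedOrder α]
    [IsCodirectedOrder α] [Nonempty α] [TopologicalSpace β] [PartialOrder β]
    [OrderClosedTopology β] {f : α → β} {c : β} (hf : Monotone f)
    (htop : Tendsto f atTop (𝓝 c)) (hbot : Tendsto f atBot (𝓝 c)) : f = fun _ ↦ c :=
  funext fun x ↦ le_antisymm (hf.ge_of_tendsto htop x) (hf.le_of_tendsto hbot x)

theorem hasDerivAt_eq_zero_of_nonneg_of_tendsto_cocompact {f f' : ℝ → ℝ} {c : ℝ}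
    (hf : ∀ x, HasDerivAt f (f' x) x) (hf' : ∀ x, 0 ≤ f' x)
    (hlim : Tendsto f (cocompact ℝ) (𝓝 c)) (x : ℝ) : f' x = 0 := by
  have hconst : f = fun _ ↦ c :=
    eq_const_of_monotone_of_tendsto (monotone_of_hasDerivAt_nonneg hf hf')
      (hlim.mono_left atTop_le_cocompact) (hlim.mono_left atBot_le_cocompact)
  exact (hconst ▸ hf x).unique (hasDerivAt_const x c)

theorem norm_le_of_norm_deriv_le {E : Type*} [NormedAddCommGroup E] [NormedSpace ℝ E]
    {v : ℝ → E} {M : ℝ} (hv : Differentiable ℝ v) (hM : ∀ x, ‖deriv v x‖ ≤ M) (x : ℝ) :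
    ‖v x‖ ≤ ‖v 0‖ + M * ‖x‖ := by
  have hincr : ‖v x - v 0‖ ≤ M * ‖x - 0‖ :=
    convex_univ.norm_image_sub_le_of_norm_deriv_le (fun y _ ↦ hv y) (fun y _ ↦ hM y)
      (Set.mem_univ 0) (Set.mem_univ x)
  rw [sub_zero] at hincr
  exact (norm_le_norm_add_norm_sub' (v x) (v 0)).trans (by gcongr)

/-- A factor with bounded derivative grows at most linearly, so one of the two factors `f`
absorbs it. -/
theorem tendsto_mul_norm_sq_cocompact {F : Type*} [NormedAddCommGroup F] [NormedSpace ℝ F]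
    {v : ℝ → ℝ} {M : ℝ} (hv : Differentiable ℝ v) (hM : ∀ x, ‖deriv v x‖ ≤ M) (f : 𝓢(ℝ, F)) :
    Tendsto (fun x ↦ v x * ‖f x‖ ^ 2) (cocompact ℝ) (𝓝 0) := by
  let C : ℕ → ℝ := fun n ↦ SchwartzMap.seminorm ℝ n 0 f
  have hM₀ : 0 ≤ M := (norm_nonneg _).trans (hM 0)
  have hvf (x : ℝ) : ‖v x‖ * ‖f x‖ ≤ ‖v 0‖ * C 0 + M * C 1 := calc
    ‖v x‖ * ‖f x‖ ≤ (‖v 0‖ + M * ‖x‖) * ‖f x‖ := by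
      gcongr
      exact norm_le_of_norm_deriv_le hv hM x
    _ = ‖v 0‖ * ‖f x‖ + M * (‖x‖ ^ 1 * ‖f x‖) := by ring
    _ ≤ ‖v 0‖ * C 0 + M * C 1 := by
      gcongr
      · exact f.norm_le_seminorm ℝ x
      · exact f.norm_pow_mul_le_seminorm ℝ 1 x
  refine squeeze_zero_norm (a := fun x ↦ (‖v 0‖ * C 0 + M * C 1) * ‖f x‖) (fun x ↦ ?_) ?_
  · calc ‖v x * ‖f x‖ ^ 2‖ = ‖v x‖ * ‖f x‖ * ‖f x‖ := by
          rw [norm_mul, norm_pow, norm_norm]; ring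
      _ ≤ _ := by gcongr; exact hvf x
  · simpa using f.tendsto_cocompact.norm.const_mul (‖v 0‖ * C 0 + M * C 1)

end Calculus

section Inner

variable {E : Type*} [NormedAddCommGroup E] [InnerProductSpace ℝ E] {ε M N f g : ℝ}

theorem real_inner_le_div_add_mul (hε : 0 < ε) (a b : E) :
    inner ℝ a b ≤ ‖a‖ ^ 2 / (2 * ε) + ε / 2 * ‖b‖ ^ 2 := by
  have hyoung := two_mul_le_add_mul_sq (a := ‖b‖) (b := ‖a‖) hε
  have hdiv : ‖a‖ ^ 2 / (2 * ε) = ε⁻¹ * ‖a‖ ^ 2 / 2 := by field_simp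
  linarith [real_inner_le_norm a b]

theorem norm_smul_add_smul_sq_le (hf : f ^ 2 ≤ M) (hg : g ^ 2 ≤ N) (a b : E) :
    ‖f • a + g • b‖ ^ 2 ≤ 2 * (M * ‖a‖ ^ 2 + N * ‖b‖ ^ 2) := calc
  ‖f • a + g • b‖ ^ 2 ≤ (‖f • a‖ + ‖g • b‖) ^ 2 := by gcongr; exact norm_add_le _ _
  _ ≤ 2 * (‖f • a‖ ^ 2 + ‖g • b‖ ^ 2) := add_sq_le
  _ = 2 * (f ^ 2 * ‖a‖ ^ 2 + g ^ 2 * ‖b‖ ^ 2) := by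
    simp only [norm_smul, mul_pow, Real.norm_eq_abs, sq_abs]
  _ ≤ 2 * (M * ‖a‖ ^ 2 + N * ‖b‖ ^ 2) := by gcongr

theorem real_inner_smul_add_smul_le (hε : 0 < ε) (hf : f ^ 2 ≤ M) (hg : g ^ 2 ≤ N) (a b c : E) :
    inner ℝ (f • a + g • b) c ≤ M / ε * ‖a‖ ^ 2 + N / ε * ‖b‖ ^ 2 + ε / 2 * ‖c‖ ^ 2 := calc
  inner ℝ (f • a + g • b) c ≤ ‖f • a + g • b‖ ^ 2 / (2 * ε) + ε / 2 * ‖c‖ ^ 2 :=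
    real_inner_le_div_add_mul hε _ c
  _ ≤ 2 * (M * ‖a‖ ^ 2 + N * ‖b‖ ^ 2) / (2 * ε) + ε / 2 * ‖c‖ ^ 2 := by
    gcongr
    exact norm_smul_add_smul_sq_le hf hg a b
  _ = M / ε * ‖a‖ ^ 2 + N / ε * ‖b‖ ^ 2 + ε / 2 * ‖c‖ ^ 2 := by field_simp

end Inner

theorem inner_complex_mul_left_self (lam z : ℂ) : inner ℝ (lam * z) z = lam.re * ‖z‖ ^ 2 := by
  rw [Complex.inner, map_mul, mul_left_comm, Complex.mul_conj, Complex.normSq_eq_norm_sq,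
    Complex.re_mul_ofReal, Complex.conj_re]

/-- The coefficients of the linearized viscous quantum hydrodynamic system in the frame moving with
speed `s`: viscosity `μ`, dispersion `k`, velocity `v` (the paper's `J / P`), and the paper's `f₁`,
`f₄`, `f₅`. -/
structure LinearizedQHD where
  s : ℝ
  μ : ℝ
  k : ℝ
  v : ℝ → ℝ
  f₁ : ℝ → ℝ
  f₄ : ℝ → ℝ
  f₅ : ℝ → ℝ
  differentiable_v : Differentiable ℝ v
  differentiable_f₁ : Differentiable ℝ f₁

namespace LinearizedQHD

variable (L : LinearizedQHD) (lam : ℂ) (rho Jt : ℝ → ℂ)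

/-- The part `2k² (√P)' (ρ / √P)'` of the Bohm potential's contribution to the momentum flux,
expanded in `ρ` and `ρ'`. -/
noncomputable def bohmFlux (x : ℝ) : ℂ :=
  L.f₅ x • deriv rho x - L.f₄ x • rho x

/-- The flux `G` for which the linearized momentum equation reads `λ J = G'`. -/
noncomputable def momentumFlux (x : ℝ) : ℂ :=
  L.s • Jt x + L.f₁ x • rho x - (2 * L.v x) • Jt x + L.μ • deriv Jt x
    + (L.k ^ 2 / 2) • deriv (deriv rho) x - L.bohmFlux rho x

/-- The equations for an eigenfunction `(ρ, J)` with eigenvalue `λ`. Stating the momentum equation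
in conservation form asks for no derivative of the individual terms of the flux. -/
structure IsEigenpair : Prop where
  mass : ∀ x, lam * rho x = L.s • deriv rho x - deriv Jt x
  momentum : ∀ x, HasDerivAt (L.momentumFlux rho Jt) (lam * Jt x) x

/-- The regularity and decay of a perturbation `(ρ, J)` that make the energy flux differentiable
and let it vanish at infinity. -/
structure IsLocalized : Prop where
  differentiable_rho : Differentiable ℝ rho
  differentiable_deriv_rho : Differentiable ℝ (deriv rho)
  differentiable_Jt : Differentiable ℝ Jt
  tendsto_rho : Tendsto rho (cocompact ℝ) (𝓝 0)
  tendsto_deriv_rho : Tendsto (deriv rho) (cocompact ℝ) (𝓝 0)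
  tendsto_deriv_deriv_rho : Tendsto (deriv (deriv rho)) (cocompact ℝ) (𝓝 0)
  tendsto_Jt : Tendsto Jt (cocompact ℝ) (𝓝 0)
  tendsto_deriv_Jt : Tendsto (deriv Jt) (cocompact ℝ) (𝓝 0)
  tendsto_v_mul : Tendsto (fun x ↦ L.v x * ‖Jt x‖ ^ 2) (cocompact ℝ) (𝓝 0)

/-- The flux of the energy `|ρ|² + |J|² + k²/2 |ρ'|²` of an eigenfunction. -/
noncomputable def energyFlux (x : ℝ) : ℝ :=
  L.s / 2 * ‖rho x‖ ^ 2 + inner ℝ (Jt x) (L.momentumFlux rho Jt x) - L.s / 2 * ‖Jt x‖ ^ 2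
    - L.f₁ x * inner ℝ (Jt x) (rho x) + L.v x * ‖Jt x‖ ^ 2
    + L.k ^ 2 / 2 * (inner ℝ (lam * rho x) (deriv rho x) - L.s / 2 * ‖deriv rho x‖ ^ 2)

/-- The terms of the energy balance that are not the derivative of a flux. -/
noncomputable def energyProduction (x : ℝ) : ℝ :=
  inner ℝ (deriv L.f₁ x • rho x + L.f₁ x • deriv rho x) (Jt x) - deriv L.v x * ‖Jt x‖ ^ 2
    - L.μ * ‖deriv Jt x‖ ^ 2 + inner ℝ (L.bohmFlux rho x) (deriv Jt x)
    - inner ℝ (rho x) (deriv Jt x)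

variable {L lam rho Jt}

theorem IsLocalized.of_schwartzMap {rho Jt : 𝓢(ℝ, ℂ)} {M : ℝ} (hM : ∀ x, |deriv L.v x| ≤ M) :
    L.IsLocalized rho Jt where
  differentiable_rho := rho.differentiable
  differentiable_deriv_rho := (SchwartzMap.derivCLM ℝ ℂ rho).differentiable
  differentiable_Jt := Jt.differentiable
  tendsto_rho := rho.tendsto_cocompact
  tendsto_deriv_rho := (SchwartzMap.derivCLM ℝ ℂ rho).tendsto_cocompact
  tendsto_deriv_deriv_rho :=
    (SchwartzMap.derivCLM ℝ ℂ (SchwartzMap.derivCLM ℝ ℂ rho)).tendsto_cocompact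
  tendsto_Jt := Jt.tendsto_cocompact
  tendsto_deriv_Jt := (SchwartzMap.derivCLM ℝ ℂ Jt).tendsto_cocompact
  tendsto_v_mul := tendsto_mul_norm_sq_cocompact L.differentiable_v hM Jt

theorem energyFlux_eq (x : ℝ) :
    L.energyFlux lam rho Jt x =
      L.s / 2 * ‖rho x‖ ^ 2 + L.s / 2 * ‖Jt x‖ ^ 2 - L.v x * ‖Jt x‖ ^ 2
        + L.μ * inner ℝ (Jt x) (deriv Jt x) + L.k ^ 2 / 2 * inner ℝ (Jt x) (deriv (deriv rho) x)
        - inner ℝ (Jt x) (L.bohmFlux rho x)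
        + L.k ^ 2 / 2 * (inner ℝ (lam * rho x) (deriv rho x)
          - L.s / 2 * ‖deriv rho x‖ ^ 2) := by
  simp only [energyFlux, momentumFlux, inner_add_right, inner_sub_right, real_inner_smul_right,
    real_inner_self_eq_norm_sq]
  ring

theorem tendsto_bohmFlux {M₄ M₅ : ℝ} (hloc : L.IsLocalized rho Jt)
    (hM₄ : ∀ x, L.f₄ x ^ 2 ≤ M₄) (hM₅ : ∀ x, L.f₅ x ^ 2 ≤ M₅) :
    Tendsto (L.bohmFlux rho) (cocompact ℝ) (𝓝 0) := by
  have hbdd {f : ℝ → ℝ} {M : ℝ} (hf : ∀ x, f x ^ 2 ≤ M) :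
      IsBoundedUnder (· ≤ ·) (cocompact ℝ) (norm ∘ f) :=
    isBoundedUnder_of ⟨√M, fun x ↦ Real.abs_le_sqrt (hf x)⟩
  rw [← sub_zero (0 : ℂ)]
  exact ((hbdd hM₅).smul_tendsto_zero hloc.tendsto_deriv_rho).sub
    ((hbdd hM₄).smul_tendsto_zero hloc.tendsto_rho)

theorem tendsto_energyFlux (hloc : L.IsLocalized rho Jt)
    (hbohm : Tendsto (L.bohmFlux rho) (cocompact ℝ) (𝓝 0)) :
    Tendsto (L.energyFlux lam rho Jt) (cocompact ℝ) (𝓝 0) := by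
  have hinner {u w : ℝ → ℂ} (hu : Tendsto u (cocompact ℝ) (𝓝 0))
      (hw : Tendsto w (cocompact ℝ) (𝓝 0)) (c : ℝ) :
      Tendsto (fun x ↦ c * inner ℝ (u x) (w x)) (cocompact ℝ) (𝓝 0) := by
    simpa using (hu.inner (𝕜 := ℝ) hw).const_mul c
  have hnorm {u : ℝ → ℂ} (hu : Tendsto u (cocompact ℝ) (𝓝 0)) (c : ℝ) :
      Tendsto (fun x ↦ c * ‖u x‖ ^ 2) (cocompact ℝ) (𝓝 0) := by
    simpa using (hu.norm.pow 2).const_mul c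
  have hlam : Tendsto (fun x ↦ lam * rho x) (cocompact ℝ) (𝓝 0) := by
    simpa using hloc.tendsto_rho.const_mul lam
  have hdisp : Tendsto (fun x ↦ L.k ^ 2 / 2 * (inner ℝ (lam * rho x) (deriv rho x)
      - L.s / 2 * ‖deriv rho x‖ ^ 2)) (cocompact ℝ) (𝓝 0) := by
    simpa using ((hinner hlam hloc.tendsto_deriv_rho 1).sub
      (hnorm hloc.tendsto_deriv_rho (L.s / 2))).const_mul (L.k ^ 2 / 2)
  rw [funext energyFlux_eq]
  simpa using ((((((hnorm hloc.tendsto_rho (L.s / 2)).add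
    (hnorm hloc.tendsto_Jt (L.s / 2))).sub hloc.tendsto_v_mul).add
    (hinner hloc.tendsto_Jt hloc.tendsto_deriv_Jt L.μ)).add
    (hinner hloc.tendsto_Jt hloc.tendsto_deriv_deriv_rho (L.k ^ 2 / 2))).sub
    (hinner hloc.tendsto_Jt hbohm 1)).add hdisp

theorem hasDerivAt_energyFlux (hloc : L.IsLocalized rho Jt) (heig : L.IsEigenpair lam rho Jt)
    (x : ℝ) :
    HasDerivAt (L.energyFlux lam rho Jt)
      (lam.re * (‖rho x‖ ^ 2 + ‖Jt x‖ ^ 2 + L.k ^ 2 / 2 * ‖deriv rho x‖ ^ 2)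
        - L.energyProduction rho Jt x) x := by
  have hrho := (hloc.differentiable_rho x).hasDerivAt
  have hrho' := (hloc.differentiable_deriv_rho x).hasDerivAt
  have hJt := (hloc.differentiable_Jt x).hasDerivAt
  have hmass (z : ℂ) :
      inner ℝ (lam * rho x) z = L.s * inner ℝ (deriv rho x) z - inner ℝ (deriv Jt x) z := by
    rw [heig.mass, inner_sub_left, real_inner_smul_left]
  have hrho_mass : lam.re * ‖rho x‖ ^ 2 =
      L.s * inner ℝ (rho x) (deriv rho x) - inner ℝ (rho x) (deriv Jt x) := by
    rw [← inner_complex_mul_left_self, hmass, real_inner_comm (rho x), real_inner_comm (rho x)]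
  have hmomentum : inner ℝ (deriv Jt x) (L.momentumFlux rho Jt x) =
      L.s * inner ℝ (Jt x) (deriv Jt x) + L.f₁ x * inner ℝ (rho x) (deriv Jt x)
        - 2 * L.v x * inner ℝ (Jt x) (deriv Jt x) + L.μ * ‖deriv Jt x‖ ^ 2
        + L.k ^ 2 / 2 * inner ℝ (deriv Jt x) (deriv (deriv rho) x)
        - inner ℝ (L.bohmFlux rho x) (deriv Jt x) := by
    rw [← real_inner_self_eq_norm_sq, real_inner_comm (deriv Jt x) (Jt x),
      real_inner_comm (deriv Jt x) (rho x), real_inner_comm (deriv Jt x) (L.bohmFlux rho x)]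
    simp only [momentumFlux, inner_add_right, inner_sub_right, real_inner_smul_right]
  refine ((((((hrho.norm_sq.const_mul (L.s / 2)).add (hJt.inner ℝ (heig.momentum x))).sub
    (hJt.norm_sq.const_mul (L.s / 2))).sub
    ((L.differentiable_f₁ x).hasDerivAt.mul (hJt.inner ℝ hrho))).add
    ((L.differentiable_v x).hasDerivAt.mul hJt.norm_sq)).add
    ((((hrho.const_mul lam).inner ℝ hrho').sub
      (hrho'.norm_sq.const_mul (L.s / 2))).const_mul (L.k ^ 2 / 2))).congr_deriv ?_
  rw [hmomentum, hmass, inner_complex_mul_left_self, real_inner_comm (lam * Jt x) (Jt x),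
    inner_complex_mul_left_self, real_inner_comm (rho x) (Jt x),
    real_inner_comm (deriv rho x) (Jt x), real_inner_comm (rho x) (deriv Jt x)]
  simp only [energyProduction, inner_add_left, real_inner_smul_left]
  linear_combination -hrho_mass

theorem energyProduction_le {M₁ M₂ M₃ M₄ M₅ ε₁ ε₂ ε₃ x : ℝ} (hM₁ : L.f₁ x ^ 2 ≤ M₁)
    (hM₂ : deriv L.f₁ x ^ 2 ≤ M₂) (hM₃ : |deriv L.v x| ≤ M₃) (hM₄ : L.f₄ x ^ 2 ≤ M₄)
    (hM₅ : L.f₅ x ^ 2 ≤ M₅) (hε₁ : 0 < ε₁) (hε₂ : 0 < ε₂) (hε₃ : 0 < ε₃)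
    (hμ : ε₁ / 2 + ε₃ / 2 ≤ L.μ) :
    L.energyProduction rho Jt x ≤ (1 / (2 * ε₁) + M₂ / ε₂ + M₄ / ε₃) * ‖rho x‖ ^ 2
      + (ε₂ / 2 + M₃) * ‖Jt x‖ ^ 2 + (M₁ / ε₂ + M₅ / ε₃) * ‖deriv rho x‖ ^ 2 := by
  have hmass : -inner ℝ (rho x) (deriv Jt x)
      ≤ 1 / (2 * ε₁) * ‖rho x‖ ^ 2 + ε₁ / 2 * ‖deriv Jt x‖ ^ 2 := by
    simpa [div_eq_inv_mul] using real_inner_le_div_add_mul hε₁ (-rho x) (deriv Jt x)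
  have hpressure : inner ℝ (deriv L.f₁ x • rho x + L.f₁ x • deriv rho x) (Jt x)
      ≤ M₂ / ε₂ * ‖rho x‖ ^ 2 + M₁ / ε₂ * ‖deriv rho x‖ ^ 2 + ε₂ / 2 * ‖Jt x‖ ^ 2 :=
    real_inner_smul_add_smul_le hε₂ hM₂ hM₁ _ _ _
  have hbohm : inner ℝ (L.bohmFlux rho x) (deriv Jt x)
      ≤ M₅ / ε₃ * ‖deriv rho x‖ ^ 2 + M₄ / ε₃ * ‖rho x‖ ^ 2 + ε₃ / 2 * ‖deriv Jt x‖ ^ 2 := by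
    have hM₄' : (-L.f₄ x) ^ 2 ≤ M₄ := by rwa [neg_sq]
    simpa only [bohmFlux, sub_eq_add_neg, neg_smul] using
      real_inner_smul_add_smul_le hε₃ hM₅ hM₄' (deriv rho x) (rho x) (deriv Jt x)
  have hvelocity : -deriv L.v x * ‖Jt x‖ ^ 2 ≤ M₃ * ‖Jt x‖ ^ 2 := by
    gcongr
    exact (neg_le_abs _).trans hM₃
  have hviscosity : (ε₁ / 2 + ε₃ / 2) * ‖deriv Jt x‖ ^ 2 ≤ L.μ * ‖deriv Jt x‖ ^ 2 := by gcongr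
  rw [energyProduction]
  linarith

theorem hasDerivAt_momentumFlux (hrho : Differentiable ℝ rho)
    (hrho'' : Differentiable ℝ (deriv (deriv rho))) (hJt : Differentiable ℝ Jt)
    (hJt' : Differentiable ℝ (deriv Jt)) (hbohm : Differentiable ℝ (L.bohmFlux rho)) (x : ℝ) :
    HasDerivAt (L.momentumFlux rho Jt)
      (L.s • deriv Jt x + deriv (fun t ↦ L.f₁ t • rho t) x
        - deriv (fun t ↦ (2 * L.v t) • Jt t) x + L.μ • deriv (deriv Jt) x
        + (L.k ^ 2 / 2) • deriv (deriv (deriv rho)) x - deriv (L.bohmFlux rho) x) x :=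
  ((((((hJt x).hasDerivAt.const_smul L.s).add
    ((L.differentiable_f₁ x).smul (hrho x)).hasDerivAt).sub
    (((L.differentiable_v x).const_mul 2).smul (hJt x)).hasDerivAt).add
    ((hJt' x).hasDerivAt.const_smul L.μ)).add
    ((hrho'' x).hasDerivAt.const_smul (L.k ^ 2 / 2))).sub (hbohm x).hasDerivAt

end LinearizedQHD

section Profile

variable {P J : ℝ → ℝ} {rho : ℝ → ℂ}

theorem deriv_eq_two_mul_sqrt_mul_deriv_sqrt (hP : Differentiable ℝ P) (hPpos : ∀ x, 0 < P x)
    (x : ℝ) : deriv P x = 2 * √(P x) * deriv (fun t ↦ √(P t)) x := by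
  rw [deriv_sqrt (hP x) (hPpos x).ne']
  have := Real.sqrt_pos.2 (hPpos x)
  field_simp

theorem bohm_eq_smul_deriv_sub_smul (k : ℝ) (hP : Differentiable ℝ P) (hPpos : ∀ x, 0 < P x)
    (hrho : Differentiable ℝ rho) (x : ℝ) :
    ((2 * k ^ 2 : ℝ) : ℂ) * (((deriv (fun t ↦ √(P t)) x : ℝ) : ℂ) *
        deriv (fun t ↦ rho t / (√(P t) : ℂ)) x) =
      (2 * k ^ 2 * deriv (fun t ↦ √(P t)) x / √(P x)) • deriv rho x
        - (k ^ 2 * deriv P x * deriv (fun t ↦ √(P t)) x / P x ^ ((3 : ℝ) / 2)) • rho x := by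
  have hsqrt : (√(P x) : ℂ) ≠ 0 := Complex.ofReal_ne_zero.2 (Real.sqrt_pos.2 (hPpos x)).ne'
  have hquot : deriv (fun t ↦ rho t / (√(P t) : ℂ)) x =
      (deriv rho x * √(P x) - rho x * deriv (fun t ↦ √(P t)) x) / (√(P x) : ℂ) ^ 2 :=
    ((hrho x).hasDerivAt.div ((hP x).sqrt (hPpos x).ne').hasDerivAt.ofReal_comp hsqrt).deriv
  have hpow : P x ^ ((3 : ℝ) / 2) = √(P x) ^ 3 := by
    rw [Real.rpow_div_two_eq_sqrt 3 (hPpos x).le]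
    norm_cast
  rw [hquot, hpow, deriv_eq_two_mul_sqrt_mul_deriv_sqrt hP hPpos, Complex.real_smul,
    Complex.real_smul]
  push_cast
  field_simp

theorem differentiable_deriv_sqrt_mul_deriv_div_sqrt (hP : ContDiff ℝ 2 P)
    (hPpos : ∀ x, 0 < P x) (hrho : ContDiff ℝ 2 rho) :
    Differentiable ℝ fun x ↦ ((deriv (fun t ↦ √(P t)) x : ℝ) : ℂ) *
      deriv (fun t ↦ rho t / (√(P t) : ℂ)) x := by
  have hsqrt : ContDiff ℝ 2 fun t ↦ √(P t) := hP.sqrt fun x ↦ (hPpos x).ne'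
  have hquot : ContDiff ℝ 2 fun t ↦ rho t / (√(P t) : ℂ) := by
    simp only [div_eq_mul_inv]
    exact hrho.mul ((Complex.ofRealCLM.contDiff.comp hsqrt).inv fun x ↦
      Complex.ofReal_ne_zero.2 (Real.sqrt_pos.2 (hPpos x)).ne')
  exact (Complex.ofRealCLM.differentiable.comp hsqrt.differentiable_deriv_two).mul
    hquot.differentiable_deriv_two

theorem differentiable_sq_div_sq_sub_const_mul_rpow (γ : ℝ) (hP : Differentiable ℝ P)
    (hPpos : ∀ x, 0 < P x) (hJ : Differentiable ℝ J) :
    Differentiable ℝ fun x ↦ J x ^ 2 / P x ^ 2 - γ * P x ^ (γ - 1) :=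
  have hne (x : ℝ) : P x ≠ 0 := (hPpos x).ne'
  ((hJ.pow 2).div (hP.pow 2) fun x ↦ pow_ne_zero 2 (hne x)).sub
    ((hP.rpow_const fun x ↦ .inl (hne x)).const_mul γ)

namespace LinearizedQHD

/-- The linearization about a profile `(P, J)`. The pressure enters through `f₁` only, which is
left free. -/
noncomputable def ofProfile (s μ k : ℝ) (P J f₁ : ℝ → ℝ) (hv : Differentiable ℝ fun t ↦ J t / P t)
    (hf₁ : Differentiable ℝ f₁) : LinearizedQHD where
  s := s
  μ := μ
  k := k
  v t := J t / P t
  f₁ := f₁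
  f₄ x := k ^ 2 * deriv P x * deriv (fun t ↦ √(P t)) x / P x ^ ((3 : ℝ) / 2)
  f₅ x := 2 * k ^ 2 * deriv (fun t ↦ √(P t)) x / √(P x)
  differentiable_v := hv
  differentiable_f₁ := hf₁

theorem isEigenpair_ofProfile {s μ k : ℝ} {f₁ : ℝ → ℝ} {lam : ℂ} {Jt : ℝ → ℂ}
    (hP : ContDiff ℝ 2 P) (hPpos : ∀ x, 0 < P x) (hv : Differentiable ℝ fun t ↦ J t / P t)
    (hf₁ : Differentiable ℝ f₁) (hrho : ContDiff ℝ 3 rho) (hJt : ContDiff ℝ 2 Jt)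
    (hmass : ∀ x, lam * rho x = (s : ℂ) * deriv rho x - deriv Jt x)
    (hmomentum : ∀ x, lam * Jt x =
      (s : ℂ) * deriv Jt x
      + deriv (fun t ↦ (f₁ t : ℂ) * rho t) x
      - deriv (fun t ↦ ((2 * J t / P t : ℝ) : ℂ) * Jt t) x
      + (μ : ℂ) * deriv (deriv Jt) x
      + ((k ^ 2 / 2 : ℝ) : ℂ) * iteratedDeriv 3 rho x
      - ((2 * k ^ 2 : ℝ) : ℂ) * deriv (fun t ↦ ((deriv (fun u ↦ √(P u)) t : ℝ) : ℂ) *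
          deriv (fun u ↦ rho u / (√(P u) : ℂ)) t) x) :
    (ofProfile s μ k P J f₁ hv hf₁).IsEigenpair lam rho Jt where
  mass := hmass
  momentum x := by
    have hPd : Differentiable ℝ P := hP.differentiable two_ne_zero
    have hrhod : Differentiable ℝ rho := hrho.differentiable three_ne_zero
    have hrho'' : Differentiable ℝ (deriv (deriv rho)) :=
      ((contDiff_succ_iff_deriv (n := 2)).1 hrho).2.2.differentiable_deriv_two
    have hbohm : (ofProfile s μ k P J f₁ hv hf₁).bohmFlux rho = fun x ↦
        ((2 * k ^ 2 : ℝ) : ℂ) * (((deriv (fun t ↦ √(P t)) x : ℝ) : ℂ) *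
          deriv (fun t ↦ rho t / (√(P t) : ℂ)) x) :=
      funext fun x ↦ (bohm_eq_smul_deriv_sub_smul k hPd hPpos hrhod x).symm
    have hbohmd : Differentiable ℝ ((ofProfile s μ k P J f₁ hv hf₁).bohmFlux rho) :=
      hbohm ▸ (differentiable_deriv_sqrt_mul_deriv_div_sqrt hP hPpos
        (hrho.of_le (by norm_num))).const_mul _
    refine (hasDerivAt_momentumFlux hrhod hrho'' (hJt.differentiable two_ne_zero)
      hJt.differentiable_deriv_two hbohmd x).congr_deriv ?_
    rw [hmomentum, hbohm, deriv_const_mul_field]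
    simp only [ofProfile, Complex.real_smul, mul_div_assoc, iteratedDeriv_succ,
      iteratedDeriv_zero]

end LinearizedQHD

end Profile

theorem stmt_17_general (L : LinearizedQHD) (hk : L.k ≠ 0) {M₁ M₂ M₃ M₄ M₅ : ℝ}
    (hM₁ : ∀ x, L.f₁ x ^ 2 ≤ M₁) (hM₂ : ∀ x, deriv L.f₁ x ^ 2 ≤ M₂)
    (hM₃ : ∀ x, |deriv L.v x| ≤ M₃) (hM₄ : ∀ x, L.f₄ x ^ 2 ≤ M₄) (hM₅ : ∀ x, L.f₅ x ^ 2 ≤ M₅)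
    {lam : ℂ} {rho Jt : ℝ → ℂ} (hloc : L.IsLocalized rho Jt) (heig : L.IsEigenpair lam rho Jt)
    (hnz : ¬ ∀ x, rho x = 0 ∧ Jt x = 0) {ε₁ ε₂ ε₃ : ℝ} (hε₁ : 0 < ε₁) (hε₂ : 0 < ε₂)
    (hε₃ : 0 < ε₃) (hμ : ε₁ / 2 + ε₃ / 2 ≤ L.μ) :
    lam.re ≤ max (max (1 / (2 * ε₁) + M₂ / ε₂ + M₄ / ε₃) (ε₂ / 2 + M₃))
      (2 * (M₁ / ε₂ + M₅ / ε₃) / L.k ^ 2) := by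
  by_contra! hlt
  simp only [max_lt_iff] at hlt
  obtain ⟨⟨hC₁, hC₂⟩, hC₃⟩ := hlt
  rw [div_lt_iff₀ (by positivity)] at hC₃
  set a := lam.re - (1 / (2 * ε₁) + M₂ / ε₂ + M₄ / ε₃) with ha
  set b := lam.re - (ε₂ / 2 + M₃) with hb
  have ha₀ : 0 < a := sub_pos.2 hC₁
  have hb₀ : 0 < b := sub_pos.2 hC₂
  have hcoercive (x : ℝ) : a * ‖rho x‖ ^ 2 + b * ‖Jt x‖ ^ 2
      ≤ lam.re * (‖rho x‖ ^ 2 + ‖Jt x‖ ^ 2 + L.k ^ 2 / 2 * ‖deriv rho x‖ ^ 2)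
        - L.energyProduction rho Jt x := by
    have hproduction := LinearizedQHD.energyProduction_le (L := L) (rho := rho) (Jt := Jt)
      (hM₁ x) (hM₂ x) (hM₃ x) (hM₄ x) (hM₅ x) hε₁ hε₂ hε₃ hμ
    have hrho' := mul_le_mul_of_nonneg_right hC₃.le (sq_nonneg ‖deriv rho x‖)
    rw [ha, hb]
    linarith
  refine hnz fun x ↦ ?_
  have hzero := hasDerivAt_eq_zero_of_nonneg_of_tendsto_cocompact
    (LinearizedQHD.hasDerivAt_energyFlux hloc heig)
    (fun x ↦ le_trans (by positivity) (hcoercive x))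
    (LinearizedQHD.tendsto_energyFlux hloc (LinearizedQHD.tendsto_bohmFlux hloc hM₄ hM₅)) x
  obtain ⟨hrho, hJt⟩ := (add_eq_zero_iff_of_nonneg (by positivity) (by positivity)).1
    (le_antisymm ((hcoercive x).trans hzero.le) (by positivity))
  simpa [ha₀.ne', hb₀.ne'] using And.intro hrho hJt

/-- energy estimate bounding the real part of any eigenvalue of the
linearization of the viscous QHD system about a traveling wave profile `(P, J)` with
`J = sP − A`: if `(rho, Jt)` is a nontrivial Schwartz eigenfunction pair for the eigenvalue
`λ`, then `Re λ ≤ max(C₁, C₂, 2C₃/k²)` for every admissible choice of `ε₁, ε₂, ε₃`. -/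
theorem stmt_17 (γ s μ k A : ℝ) (hγ : 1 ≤ γ) (hμ : 0 < μ) (hk : 0 < k)
    (P J : ℝ → ℝ) (hP : ContDiff ℝ (⊤ : ℕ∞) P) (hPpos : ∀ x : ℝ, 0 < P x)
    (hJ : ∀ x : ℝ, J x = s * P x - A)
    (f₁ f₄ f₅ : ℝ → ℝ)
    (hf₁ : ∀ x : ℝ, f₁ x = (J x) ^ 2 / (P x) ^ 2 - γ * (P x) ^ (γ - 1))
    (hf₄ : ∀ x : ℝ, f₄ x =
      k ^ 2 * deriv P x * deriv (fun t => Real.sqrt (P t)) x / (P x) ^ ((3 : ℝ) / 2))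
    (hf₅ : ∀ x : ℝ, f₅ x = 2 * k ^ 2 * deriv (fun t => Real.sqrt (P t)) x / Real.sqrt (P x))
    (M₁ M₂ M₃ M₄ M₅ : ℝ)
    (hb₁ : BddAbove (Set.range fun x => (f₁ x) ^ 2))
    (hM₁ : M₁ = ⨆ x : ℝ, (f₁ x) ^ 2)
    (hb₂ : BddAbove (Set.range fun x => (deriv f₁ x) ^ 2))
    (hM₂ : M₂ = ⨆ x : ℝ, (deriv f₁ x) ^ 2)
    (hb₃ : BddAbove (Set.range fun x => |deriv (fun t => J t / P t) x|))
    (hM₃ : M₃ = ⨆ x : ℝ, |deriv (fun t => J t / P t) x|)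
    (hb₄ : BddAbove (Set.range fun x => (f₄ x) ^ 2))
    (hM₄ : M₄ = ⨆ x : ℝ, (f₄ x) ^ 2)
    (hb₅ : BddAbove (Set.range fun x => (f₅ x) ^ 2))
    (hM₅ : M₅ = ⨆ x : ℝ, (f₅ x) ^ 2)
    (lam : ℂ) (rho Jt : SchwartzMap ℝ ℂ)
    (hnz : ¬ ∀ x : ℝ, rho x = 0 ∧ Jt x = 0)
    (heq1 : ∀ x : ℝ, lam * rho x = (s : ℂ) * deriv (⇑rho) x - deriv (⇑Jt) x)
    (heq2 : ∀ x : ℝ, lam * Jt x =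
      (s : ℂ) * deriv (⇑Jt) x
      + deriv (fun t => ((f₁ t : ℝ) : ℂ) * rho t) x
      - deriv (fun t => ((2 * J t / P t : ℝ) : ℂ) * Jt t) x
      + (μ : ℂ) * deriv (deriv (⇑Jt)) x
      + ((k ^ 2 / 2 : ℝ) : ℂ) * iteratedDeriv 3 (⇑rho) x
      - ((2 * k ^ 2 : ℝ) : ℂ) *
          deriv (fun t => ((deriv (fun u => Real.sqrt (P u)) t : ℝ) : ℂ) *
            deriv (fun u => rho u / ((Real.sqrt (P u) : ℝ) : ℂ)) t) x) :
    ∀ ε₁ ε₂ ε₃ : ℝ, 0 < ε₁ → 0 < ε₂ → 0 < ε₃ → ε₁ / 2 + ε₃ / 2 < μ →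
      lam.re ≤ max (max (1 / (2 * ε₁) + M₂ / ε₂ + M₄ / ε₃) (ε₂ / 2 + M₃))
        (2 * (M₁ / ε₂ + M₅ / ε₃) / k ^ 2) := by
  intro ε₁ ε₂ ε₃ hε₁ hε₂ hε₃ hμε
  have hPd : Differentiable ℝ P := hP.differentiable (by simp)
  have hJd : Differentiable ℝ J := funext hJ ▸ (hPd.const_mul s).sub_const A
  have hv : Differentiable ℝ fun t ↦ J t / P t := hJd.div hPd fun x ↦ (hPpos x).ne'
  have hf₁d : Differentiable ℝ f₁ :=
    funext hf₁ ▸ differentiable_sq_div_sq_sub_const_mul_rpow γ hPd hPpos hJd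
  obtain rfl : f₄ = _ := funext hf₄
  obtain rfl : f₅ = _ := funext hf₅
  exact stmt_17_general (.ofProfile s μ k P J f₁ hv hf₁d) hk.ne'
    (fun x ↦ hM₁ ▸ le_ciSup hb₁ x) (fun x ↦ hM₂ ▸ le_ciSup hb₂ x) (fun x ↦ hM₃ ▸ le_ciSup hb₃ x)
    (fun x ↦ hM₄ ▸ le_ciSup hb₄ x) (fun x ↦ hM₅ ▸ le_ciSup hb₅ x)
    (.of_schwartzMap fun x ↦ le_ciSup hb₃ x)
    (LinearizedQHD.isEigenpair_ofProfile (mod_cast contDiff_infty.1 hP 2) hPpos hv hf₁d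
      (rho.smooth 3) (Jt.smooth 2) heq1 heq2)
    hnz hε₁ hε₂ hε₃ hμε.le
end
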